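/- arXiv:1510.05191 — 2 statements merged into one kernel-verified Lean document; each statement's English description precedes it below -/
import Mathlib

section
/- For every ε > 0 there exists a constant C > 0 such that for all nonzero integers m and n and all real X ≥ 2, Σ_{1 ≤ c ≤ X} |S(m,n,c,χ)|/c ≤ C · X^{1/2} · (log X) · |mn|^{ε}, where the sum runs over integers c with 1 ≤ c ≤ X. -/
open Finset

/-- `e(x) = exp(2πix)`. -/
noncomputable def eFun (x : ℝ) : ℂ := Complex.exp (2 * (Real.pi : ℂ) * Complex.I * (x : ℂ))

/-- The Dedekind sum `s(d,c)`. -/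
noncomputable def dedekindS (d : ℤ) (c : ℕ) : ℝ :=
  ∑ r ∈ Finset.Icc 1 (c - 1),
    ((r : ℝ) / c) * ((d : ℝ) * r / c - ⌊(d : ℝ) * r / c⌋ - 1 / 2)

/-- The Kloosterman sum `S(m,n,c,χ)` with the eta multiplier. -/
noncomputable def klooS (m n : ℤ) (c : ℕ) : ℂ :=
  Complex.exp ((Real.pi : ℂ) * Complex.I / 4) *
    ∑ d ∈ (Finset.Icc 1 c).filter fun d => Nat.gcd d c = 1,
      Complex.exp ((Real.pi : ℂ) * Complex.I * (dedekindS (d : ℤ) c)) *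
        eFun ((((m : ℝ) - 1) * (((d : ZMod c)⁻¹).val : ℝ) + ((n : ℝ) - 1) * (d : ℝ)) / c)


/-- Integer version of `12 c s(d,c)`. -/
def zDed (d : ℤ) (c : ℕ) : ℤ :=
  2 * d * (c - 1) * (2 * c - 1) - 12 * ∑ r ∈ Finset.range c, (r : ℤ) * ((d * r) / (c : ℤ))
    - 3 * c * (c - 1)

lemma sum_id_int (c : ℕ) : 2 * ∑ r ∈ Finset.range c, (r : ℤ) = c * (c - 1) := by
  induction c with
  | zero => simp
  | succ k ih => rw [Finset.sum_range_succ, mul_add, ih]; push_cast; ring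

lemma sum_sq_int (c : ℕ) :
    6 * ∑ r ∈ Finset.range c, (r : ℤ) ^ 2 = c * (c - 1) * (2 * c - 1) := by
  induction c with
  | zero => simp
  | succ k ih => rw [Finset.sum_range_succ, mul_add, ih]; push_cast; ring

lemma zDed_eq (d : ℤ) (c : ℕ) (hc : 1 ≤ c) : 12 * c * dedekindS d c = zDed d c := by
  have hc0 : (c : ℝ) ≠ 0 := by positivity
  have h1 : ∑ r ∈ Finset.Icc 1 (c - 1),
      ((r : ℝ) / c) * ((d : ℝ) * r / c - ⌊(d : ℝ) * r / c⌋ - 1 / 2) =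
      ∑ r ∈ Finset.range c, ((r : ℝ) / c) * ((d : ℝ) * r / c - ⌊(d : ℝ) * r / c⌋ - 1 / 2) := by
    apply Finset.sum_subset
    · intro r hr; simp at hr ⊢; omega
    · intro r hr hr2
      have : r = 0 := by simp at hr hr2; omega
      simp [this]
  have h2 : ∀ r : ℕ, ⌊(d : ℝ) * r / c⌋ = (d * r) / (c : ℤ) := by
    intro r
    have h3 := Rat.floor_intCast_div_natCast (d * r) c
    rw [← h3, ← Rat.floor_cast (α := ℝ)]
    push_cast
    rfl
  have i1 := sum_id_int c
  have i2 := sum_sq_int c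
  have i1' : 2 * ∑ r ∈ Finset.range c, (r : ℝ) = c * (c - 1) := by
    have := congrArg (Int.cast : ℤ → ℝ) i1
    push_cast at this; exact this
  have i2' : 6 * ∑ r ∈ Finset.range c, (r : ℝ) ^ 2 = c * (c - 1) * (2 * c - 1) := by
    have := congrArg (Int.cast : ℤ → ℝ) i2
    push_cast at this; exact this
  unfold dedekindS zDed
  rw [h1]
  simp_rw [h2]
  have : ∀ r : ℕ, ((r : ℝ) / c) * ((d : ℝ) * r / c - ((d * r / (c : ℤ) : ℤ) : ℝ) - 1 / 2)
     = (d / c ^ 2) * (r : ℝ) ^ 2 - (1 / c) * (r * ((d * r / (c : ℤ) : ℤ) : ℝ)) - (1 / (2 * c)) * r := by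
    intro r; field_simp
  simp_rw [this]
  rw [Finset.sum_sub_distrib, Finset.sum_sub_distrib, ← Finset.mul_sum, ← Finset.mul_sum,
    ← Finset.mul_sum]
  push_cast
  field_simp
  linear_combination 4 * d * i2' - 6 * c * i1'

lemma zDed_add (d k : ℤ) (c : ℕ) (hc : 1 ≤ c) : zDed (d + k * c) c = zDed d c := by
  have hc0 : (c : ℤ) ≠ 0 := by positivity
  have : ∀ r : ℕ, (r : ℤ) * (((d + k * c) * r) / (c : ℤ)) = r * ((d * r) / (c : ℤ)) + k * (r:ℤ) ^ 2 := by
    intro r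
    rw [show (d + k * c) * r = d * r + (k * r) * c by ring, Int.add_mul_ediv_right _ _ hc0]
    ring
  unfold zDed
  simp_rw [this]
  rw [Finset.sum_add_distrib, ← Finset.mul_sum]
  linear_combination -2 * k * sum_sq_int c

lemma zDed_neg (d : ℤ) (c : ℕ) (hc : 1 ≤ c) (h : IsCoprime d (c : ℤ)) :
    zDed (-d) c = - zDed d c := by
  have hc0 : (c : ℤ) ≠ 0 := by positivity
  have : ∀ r ∈ Finset.range c, (r : ℤ) * ((-d * r) / (c : ℤ)) =
      -(r * ((d * r) / (c : ℤ))) - r := by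
    intro r hr
    rcases Nat.eq_zero_or_pos r with h0 | h0
    · simp [h0]
    · have hnd : ¬ ((c : ℤ) ∣ d * r) := by
        intro hd
        have := h.symm.dvd_of_dvd_mul_left hd
        have := Int.le_of_dvd (by positivity) this
        simp at hr; omega
      have e1 : (-d * r) / (c : ℤ) = - ((d * r) / (c : ℤ)) - 1 := by
        have h1 := Int.emod_add_mul_ediv (d * r) c
        have h2 := Int.emod_pos_of_not_dvd hnd
        have h3 := Int.emod_lt_of_pos (d * r) (show (0:ℤ) < c by positivity)
        have h2' : 0 < (d * r) % (c:ℤ) := by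
          rcases h2 with h2 | h2
          · exact absurd h2 hc0
          · exact h2
        rw [Int.ediv_eq_iff_of_pos (by positivity)]
        constructor <;> nlinarith
      rw [e1]; ring
  unfold zDed
  rw [Finset.sum_congr rfl this, Finset.sum_sub_distrib, Finset.sum_neg_distrib]
  linear_combination 6 * sum_id_int c

lemma sum_perm {c d : ℕ} (hc : 1 ≤ c) (h : Nat.Coprime d c) (f : ℕ → ℤ) :
    ∑ r ∈ Finset.range c, f ((d * r) % c) = ∑ r ∈ Finset.range c, f r := by
  have hinj : Set.InjOn (fun r => (d * r) % c) (Finset.range c : Set ℕ) := by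
    intro a ha b hb hab
    simp at ha hb
    have : a ≡ b [MOD c] := Nat.ModEq.cancel_left_of_coprime h.symm hab
    exact Nat.ModEq.eq_of_lt_of_lt this ha hb
  have him : (Finset.range c).image (fun r => (d * r) % c) = Finset.range c := by
    apply Finset.eq_of_subset_of_card_le
    · intro x hx
      simp only [Finset.mem_image, Finset.mem_range] at hx ⊢
      obtain ⟨a, _, rfl⟩ := hx
      exact Nat.mod_lt _ hc
    · rw [Finset.card_image_of_injOn hinj]
  conv_rhs => rw [← him]
  rw [Finset.sum_image hinj]

lemma sum_swap {c d : ℕ} (hc : 1 ≤ c) (hd : 1 ≤ d) (h : Nat.Coprime d c) :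
    ∑ r ∈ Finset.range c, (((d * r / c : ℕ) : ℤ) ^ 2 + ((d * r / c : ℕ) : ℤ)) =
      (c - 1) * (d * (d - 1)) - 2 * ∑ s ∈ Finset.range d, (s : ℤ) * ((c * s / d : ℕ) : ℤ) := by
  have h1 : ∀ r ∈ Finset.range c, (((d * r / c : ℕ) : ℤ) ^ 2 + ((d * r / c : ℕ) : ℤ)) =
      2 * ∑ s ∈ Finset.range d, if s * c ≤ d * r then (s : ℤ) else 0 := by
    intro r hr
    have hlt : d * r / c < d := by
      rw [Nat.div_lt_iff_lt_mul hc]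
      simp at hr
      exact Nat.mul_lt_mul_of_pos_left hr hd
    rw [← Finset.sum_filter]
    have : (Finset.range d).filter (fun s => s * c ≤ d * r) = Finset.range (d * r / c + 1) := by
      ext s
      simp only [Finset.mem_filter, Finset.mem_range, Nat.lt_succ_iff, Nat.le_div_iff_mul_le hc]
      constructor
      · exact fun h => h.2
      · intro hs
        refine ⟨?_, hs⟩
        exact lt_of_le_of_lt ((Nat.le_div_iff_mul_le hc).2 hs) hlt
    rw [this, sum_id_int]
    push_cast; ring
  rw [Finset.sum_congr rfl h1, ← Finset.mul_sum, Finset.sum_comm]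
  have h2 : ∀ s ∈ Finset.range d, (∑ r ∈ Finset.range c, if s * c ≤ d * r then (s : ℤ) else 0) =
      (c - 1) * s - s * ((c * s / d : ℕ) : ℤ) := by
    intro s hs
    rcases Nat.eq_zero_or_pos s with h0 | h0
    · simp [h0]
    · simp only [Finset.mem_range] at hs
      have hlt : c * s / d < c := by
        rw [Nat.div_lt_iff_lt_mul hd]
        exact Nat.mul_lt_mul_of_pos_left hs hc
      have hnd : ¬ d ∣ c * s := by
        intro hh
        have := Nat.le_of_dvd h0 (h.dvd_of_dvd_mul_left hh)
        omega
      rw [← Finset.sum_filter]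
      have : (Finset.range c).filter (fun r => s * c ≤ d * r) = Finset.Ico (c * s / d + 1) c := by
        ext r
        simp only [Finset.mem_filter, Finset.mem_range, Finset.mem_Ico, Nat.succ_le_iff]
        rw [Nat.div_lt_iff_lt_mul hd]
        constructor
        · rintro ⟨h1, h2⟩
          refine ⟨lt_of_le_of_ne (by linarith [mul_comm r d, mul_comm s c]) ?_, h1⟩
          intro he
          exact hnd ⟨r, by rw [he, mul_comm]⟩
        · rintro ⟨h1, h2⟩
          exact ⟨h2, by linarith [mul_comm r d, mul_comm s c]⟩
      rw [this, Finset.sum_const, Nat.card_Ico, nsmul_eq_mul]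
      rw [Nat.cast_sub hlt]
      push_cast; ring
  rw [Finset.sum_congr rfl h2, Finset.sum_sub_distrib, ← Finset.mul_sum]
  linear_combination (c - 1 : ℤ) * sum_id_int d

lemma zDed_recip {c d : ℕ} (hc : 1 ≤ c) (hd : 1 ≤ d) (h : Nat.Coprime d c) :
    (d : ℤ) * zDed d c + c * zDed c d = d ^ 2 + c ^ 2 + 1 - 3 * d * c := by
  have hc0 : (c : ℤ) ≠ 0 := by positivity
  have p1 := sum_perm hc h (fun r => (r : ℤ))
  have p2 := sum_perm hc h (fun r => (r : ℤ) ^ 2)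
  have hm : ∀ r : ℕ, (((d * r) % c : ℕ) : ℤ) = d * r - c * ((d * r / c : ℕ) : ℤ) := by
    intro r
    have := Nat.mod_add_div (d * r) c
    have : (((d * r) % c : ℕ) : ℤ) + c * ((d * r / c : ℕ) : ℤ) = d * r := by exact_mod_cast this
    linarith
  have e1 : ∀ r : ℕ, (((d * r) % c : ℕ) : ℤ) ^ 2 = d ^ 2 * (r : ℤ) ^ 2 -
    2 * d * c * (r * ((d * r / c : ℕ) : ℤ)) + c ^ 2 * ((d * r / c : ℕ) : ℤ) ^ 2 := by
    intro r; rw [hm]; ring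
  simp only [e1] at p2
  simp only [hm] at p1
  rw [Finset.sum_add_distrib, Finset.sum_sub_distrib, ← Finset.mul_sum, ← Finset.mul_sum,
    ← Finset.mul_sum] at p2
  rw [Finset.sum_sub_distrib, ← Finset.mul_sum, ← Finset.mul_sum] at p1
  have p3 := sum_swap hc hd h
  rw [Finset.sum_add_distrib] at p3
  have q1 := sum_id_int c
  have q2 := sum_sq_int c
  unfold zDed
  have r1 : ∀ r : ℕ, ((d : ℤ) * r) / (c : ℤ) = ((d * r / c : ℕ) : ℤ) := by intro r; push_cast; rfl
  have r2 : ∀ r : ℕ, ((c : ℤ) * r) / (d : ℤ) = ((c * r / d : ℕ) : ℤ) := by intro r; push_cast; rfl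
  simp only [r1, r2]
  set A := ∑ r ∈ Finset.range c, (r : ℤ) * ((d * r / c : ℕ) : ℤ)
  set B := ∑ r ∈ Finset.range d, (r : ℤ) * ((c * r / d : ℕ) : ℤ)
  set F2 := ∑ r ∈ Finset.range c, ((d * r / c : ℕ) : ℤ) ^ 2
  set F1 := ∑ r ∈ Finset.range c, ((d * r / c : ℕ) : ℤ)
  apply mul_left_cancel₀ hc0
  linear_combination 6 * p2 - 6 * c ^ 2 * p3 - 6 * c * p1 +
     (1 - d ^ 2 : ℤ) * q2 + (3 * c * (d - 1) : ℤ) * q1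

lemma zDed_three {c d : ℕ} (hd : Nat.Coprime d 3) : (3 : ℤ) ∣ zDed c d := by
  have : d % 3 = 1 ∨ d % 3 = 2 := by
    have : ¬ 3 ∣ d := fun h => by
      have := Nat.dvd_gcd h (dvd_refl 3); rw [hd] at this; norm_num at this
    omega
  unfold zDed
  apply dvd_sub
  · apply dvd_sub
    · rw [mul_assoc]
      apply Dvd.dvd.mul_left
      have : (d : ℤ) % 3 = 1 ∨ (d : ℤ) % 3 = 2 := by omega
      rcases this with h | h
      · exact Dvd.dvd.mul_right (by omega) _
      · exact Dvd.dvd.mul_left (by omega) _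
    · exact ⟨4 * _, by ring⟩
  · exact ⟨d * (d - 1), by ring⟩

open scoped NumberTheorySymbols

lemma aux_decide : ∀ c d e : ZMod 8, c ^ 2 = 1 → d ^ 2 = 1 → (e = 1 ∨ e = -1) →
    d * (d ^ 2 + c ^ 2 + 1 - 3 * d * c - c * (d + 1 - 2 * e)) =
      c + 1 - 2 * (if 2 * d = 6 ∧ 2 * c = 6 then -e else e) := by
  decide

lemma odd_sq_zmod8 {c : ℕ} (hc : Odd c) : (c : ZMod 8) ^ 2 = 1 := by
  have h : c % 8 = 1 ∨ c % 8 = 3 ∨ c % 8 = 5 ∨ c % 8 = 7 := by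
    obtain ⟨k, rfl⟩ := hc; omega
  rw [← ZMod.natCast_mod c 8]
  rcases h with h | h | h | h <;> rw [h] <;> decide

lemma mod4_zmod8 {c : ℕ} : (2 * (c : ZMod 8) = 6) ↔ c % 4 = 3 := by
  have : c % 8 < 8 := Nat.mod_lt _ (by norm_num)
  rw [← ZMod.natCast_mod c 8, show c % 4 = (c % 8) % 4 by omega]
  generalize c % 8 = x at *
  interval_cases x <;> decide

lemma zDed_step {c d : ℕ} (hc : Odd c) (hd : Odd d) (h : Nat.Coprime d c)
    (ih : ((zDed c d : ℤ) : ZMod 8) = d + 1 - 2 * (J(c | d) : ℤ)) :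
    ((zDed d c : ℤ) : ZMod 8) = c + 1 - 2 * (J(d | c) : ℤ) := by
  have hr := zDed_recip hc.pos hd.pos h
  have hr' := congrArg (Int.cast : ℤ → ZMod 8) hr
  push_cast at hr'
  have c2 := odd_sq_zmod8 hc
  have d2 := odd_sq_zmod8 hd
  have hJ : J(c | d) = 1 ∨ J(c | d) = -1 :=
    jacobiSym.eq_one_or_neg_one (by rw [Int.gcd_natCast_natCast]; exact h.symm)
  have he : ((J(c | d) : ℤ) : ZMod 8) = 1 ∨ ((J(c | d) : ℤ) : ZMod 8) = -1 := by
    rcases hJ with h | h <;> rw [h] <;> simp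
  have key := aux_decide c d (J(c | d) : ℤ) c2 d2 he
  rw [← ih] at key
  have hq := jacobiSym.quadratic_reciprocity_if (Nat.odd_iff.1 hd) (Nat.odd_iff.1 hc)
  have e1 : ((J(d | c) : ℤ) : ZMod 8) = (if 2 * (d : ZMod 8) = 6 ∧ 2 * (c : ZMod 8) = 6 then -((J(c | d) : ℤ) : ZMod 8) else ((J(c | d) : ℤ) : ZMod 8)) := by
    rw [← hq]
    simp only [mod4_zmod8]
    split_ifs <;> simp
  rw [e1, ← key, ← hr']
  linear_combination (-((zDed d c : ℤ) : ZMod 8)) * d2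

lemma zDed_mod8 : ∀ c : ℕ, Odd c → ∀ d : ℤ, IsCoprime d (c : ℤ) →
    ((zDed d c : ℤ) : ZMod 8) = c + 1 - 2 * (J(d | c) : ℤ) := by
  intro c
  induction c using Nat.strong_induction_on with
  | _ c IH =>
  intro hc d hd
  rcases Nat.lt_or_ge 1 c with h1 | h1
  swap
  · have : c = 1 := by have := hc.pos; omega
    subst this
    simp [zDed]
    decide
  have hcpos : (0 : ℤ) < c := by positivity
  have hr0 := Int.emod_nonneg d hcpos.ne'
  have hr1 := Int.emod_lt_of_pos d hcpos
  have hdiv := Int.emod_add_mul_ediv d c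
  have hcop : IsCoprime (d % c) (c : ℤ) := by
    have : d % c = d + c * (- (d / c)) := by linarith
    rw [this]; exact IsCoprime.add_mul_left_left hd _
  -- odd case lemma
  have main : ∀ d' : ℕ, Odd d' → d' < c → IsCoprime (d' : ℤ) (c : ℤ) →
      ((zDed d' c : ℤ) : ZMod 8) = c + 1 - 2 * (J(d' | c) : ℤ) := by
    intro d' ho hlt hcop
    exact zDed_step hc ho (Nat.isCoprime_iff_coprime.1 hcop) (IH d' hlt ho c hcop.symm)
  obtain ⟨r, hr⟩ := Int.eq_ofNat_of_zero_le hr0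
  rw [hr] at hdiv hr1 hcop
  rcases Nat.even_or_odd r with he | ho
  · -- even
    have hrlt : r < c := by exact_mod_cast hr1
    have ho' : Odd (c - r) := Nat.Odd.sub_even hrlt.le hc he
    have hrpos : 0 < r := by
      rcases Nat.eq_zero_or_pos r with h | h
      · subst h
        rw [Nat.cast_zero, isCoprime_zero_left] at hcop
        have := Int.isUnit_iff.1 hcop
        omega
      · exact h
    have hcast : ((c - r : ℕ) : ℤ) = c - r := by rw [Nat.cast_sub hrlt.le]
    have hcop' : IsCoprime ((c - r : ℕ) : ℤ) (c : ℤ) := by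
      rw [hcast]
      have : (c : ℤ) - r = - r + c * 1 := by ring
      rw [this]; exact IsCoprime.add_mul_left_left hcop.neg_left _
    have hm := main (c - r) ho' (by omega) hcop'
    have hd' : d = -((c - r : ℕ) : ℤ) + (d / c + 1) * c := by rw [hcast]; linarith
    have hJ : J(d | c) = ZMod.χ₄ c * J((c - r : ℕ) | c) := by
      rw [← jacobiSym.neg _ hc]
      apply jacobiSym.mod_left'
      conv_lhs => rw [hd']
      simp
    rw [hJ]
    rw [hd', zDed_add _ _ _ hc.pos, zDed_neg _ _ hc.pos hcop']
    push_cast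
    rw [hm]
    have hJ' : J((c - r : ℕ) | c) = 1 ∨ J((c - r : ℕ) | c) = -1 :=
      jacobiSym.eq_one_or_neg_one (Int.isCoprime_iff_gcd_eq_one.1 hcop')
    have h8 : (c : ZMod 8) = (c % 8 : ℕ) := by simp
    have h4 : ZMod.χ₄ (c : ZMod 4) = ZMod.χ₄ ((c % 8 : ℕ) : ZMod 4) := by
      congr 1
      rw [← ZMod.natCast_mod c 4, ← ZMod.natCast_mod (c % 8) 4]; congr 1; omega
    rw [h8, h4]
    have h : c % 8 = 1 ∨ c % 8 = 3 ∨ c % 8 = 5 ∨ c % 8 = 7 := by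
      obtain ⟨k, rfl⟩ := hc; omega
    rcases hJ' with hJ' | hJ' <;> rw [hJ'] <;> rcases h with h | h | h | h <;> rw [h] <;> decide
  · have hd' : d = (r : ℤ) + (d / c) * c := by linarith
    have hm := main r ho (by exact_mod_cast hr1) hcop
    have hJ : J(d | c) = J((r : ℤ) | c) := by
      apply jacobiSym.mod_left'
      conv_lhs => rw [hd']
      simp
    rw [hJ]
    rw [hd', zDed_add _ _ _ hc.pos]
    exact hm

/-- The key congruence: for `d > 0` coprime to `6c`. -/
lemma zDed_formula {c d : ℕ} (hc : 1 ≤ c) (h : Nat.Coprime d (6 * c)) :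
    (24 * c : ℤ) ∣ (d : ℤ) * zDed d c -
      (d ^ 2 + c ^ 2 + 1 - 3 * d * c - 9 * c * (d + 1) - 6 * c * J(c | d)) := by
  have hdc : Nat.Coprime d c := Nat.Coprime.coprime_mul_left_right h
  have hd6 : Nat.Coprime d 6 := Nat.Coprime.coprime_mul_right_right h
  have hd2 : Nat.Coprime d 2 := Nat.Coprime.coprime_dvd_right (by norm_num) hd6
  have hd3 : Nat.Coprime d 3 := Nat.Coprime.coprime_dvd_right (by norm_num) hd6
  have hodd : Odd d := by rwa [Nat.coprime_comm, Nat.coprime_two_left] at hd2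
  have hr := zDed_recip hc hodd.pos hdc
  have h3 := zDed_three (c := c) hd3
  have h8 := zDed_mod8 d hodd c (Nat.isCoprime_iff_coprime.2 hdc.symm)
  have h8' : (8 : ℤ) ∣ zDed c d - (d + 1 - 2 * J(c | d)) := by
    have : ((zDed c d - (d + 1 - 2 * J(c | d)) : ℤ) : ZMod 8) = 0 := by
      push_cast; rw [h8]; ring
    exact_mod_cast (ZMod.intCast_zmod_eq_zero_iff_dvd _ 8).1 this
  have h24 : (24 : ℤ) ∣ zDed c d - 9 * (d + 1) - 6 * J(c | d) := by omega
  have : (d : ℤ) * zDed d c -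
      (d ^ 2 + c ^ 2 + 1 - 3 * d * c - 9 * c * (d + 1) - 6 * c * J(c | d)) =
      -(c * (zDed c d - 9 * (d + 1) - 6 * J(c | d))) := by linarith
  rw [this, dvd_neg, mul_comm]
  exact mul_dvd_mul_left _ h24

/-- `exp(2πi k/q)`. -/
noncomputable def ee (q : ℕ) (k : ℤ) : ℂ :=
  Complex.exp (2 * (Real.pi : ℂ) * Complex.I * k / q)

lemma ee_eq (q : ℕ) [NeZero q] (k : ℤ) : ee q k = ZMod.stdAddChar (k : ZMod q) := by
  rw [ZMod.stdAddChar_coe, ee]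

lemma ee_add (q : ℕ) (k l : ℤ) : ee q (k + l) = ee q k * ee q l := by
  unfold ee; rw [← Complex.exp_add]; congr 1; push_cast; ring

lemma ee_congr {q : ℕ} (hq : 1 ≤ q) {k l : ℤ} (h : (q : ℤ) ∣ k - l) : ee q k = ee q l := by
  have : NeZero q := ⟨by omega⟩
  rw [ee_eq, ee_eq]
  congr 1
  exact ((ZMod.intCast_eq_intCast_iff_dvd_sub l k q).2 h).symm

lemma norm_ee (q : ℕ) (k : ℤ) : ‖ee q k‖ = 1 := by
  unfold ee
  have : 2 * (Real.pi : ℂ) * Complex.I * k / q = ((2 * Real.pi * k / q : ℝ) : ℂ) * Complex.I := by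
    push_cast; ring
  rw [this, Complex.norm_exp_ofReal_mul_I]

lemma ee_split {a b : ℕ} (ha : 1 ≤ a) (hb : 1 ≤ b) {u v : ℤ} (h : u * a + v * b = 1) (k : ℤ) :
    ee (a * b) k = ee a (v * k) * ee b (u * k) := by
  unfold ee
  rw [← Complex.exp_add]
  congr 1
  have ha' : (a : ℂ) ≠ 0 := by exact_mod_cast (by omega : a ≠ 0)
  have hb' : (b : ℂ) ≠ 0 := by exact_mod_cast (by omega : b ≠ 0)
  have h' : (u : ℂ) * a + v * b = 1 := by exact_mod_cast h
  push_cast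
  field_simp
  linear_combination (-(k : ℂ)) * h'

lemma ee_mul_cancel {a : ℕ} (ha : 1 ≤ a) (b : ℕ) (k : ℤ) : ee (a * b) (a * k) = ee b k := by
  unfold ee
  congr 1
  have ha' : (a : ℂ) ≠ 0 := by exact_mod_cast (by omega : a ≠ 0)
  push_cast
  rcases Nat.eq_zero_or_pos b with h | h
  · simp [h]
  have hb' : (b : ℂ) ≠ 0 := by exact_mod_cast (by omega : b ≠ 0)
  field_simp

lemma sum_range_zmod (q : ℕ) [NeZero q] (f : ZMod q → ℂ) :
    ∑ y ∈ Finset.range q, f (y : ZMod q) = ∑ y : ZMod q, f y := by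
  refine Finset.sum_bij' (fun y _ => (y : ZMod q)) (fun y _ => y.val) ?_ ?_ ?_ ?_ ?_
  · intro a _; exact Finset.mem_univ _
  · intro a _; exact Finset.mem_range.2 (ZMod.val_lt a)
  · intro a ha; exact ZMod.val_cast_of_lt (Finset.mem_range.1 ha)
  · intro a _; exact ZMod.natCast_zmod_val a
  · intro a _; rfl

lemma sum_range_mul' (a b : ℕ) (f : ℕ → ℂ) :
    ∑ y ∈ Finset.range (a * b), f y =
      ∑ i ∈ Finset.range a, ∑ j ∈ Finset.range b, f (j + b * i) := by
  induction a with
  | zero => simp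
  | succ k ih =>
    rw [Nat.succ_mul, Finset.sum_range_add, ih, Finset.sum_range_succ]
    congr 1
    apply Finset.sum_congr rfl
    intro j _
    congr 1; ring

/-- quadratic Gauss sum -/
noncomputable def gs (q : ℕ) (x : ℤ) : ℂ := ∑ y ∈ Finset.range q, ee q (x * y ^ 2)

lemma gs_eq (q : ℕ) [NeZero q] (x : ℤ) :
    gs q x = ∑ y : ZMod q, ZMod.stdAddChar ((x : ZMod q) * y ^ 2) := by
  rw [← sum_range_zmod]
  apply Finset.sum_congr rfl
  intro y _
  rw [ee_eq]; push_cast; rfl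

lemma sum_ee (p : ℕ) (hp : 1 ≤ p) (t : ℤ) :
    ∑ z ∈ Finset.range p, ee p (z * t) = if (p : ℤ) ∣ t then (p : ℂ) else 0 := by
  have : NeZero p := ⟨by omega⟩
  have := AddChar.sum_mulShift (t : ZMod p) (ZMod.isPrimitive_stdAddChar p)
  rw [← sum_range_zmod, ZMod.card] at this
  simp only [ZMod.intCast_zmod_eq_zero_iff_dvd] at this
  rw [Nat.cast_ite, Nat.cast_zero] at this
  rw [← this]
  apply Finset.sum_congr rfl
  intro y _
  rw [ee_eq]; push_cast; rfl

lemma gs_sq_mul {p q : ℕ} (hp : p.Prime) (hp2 : p ≠ 2) (hq : 1 ≤ q) {x : ℤ}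
    (hx : ¬ (p : ℤ) ∣ x) : gs (p * (p * q)) x = p * gs q x := by
  have hp1 : 1 ≤ p := hp.one_lt.le
  have hpi : Prime (p : ℤ) := Nat.prime_iff_prime_int.1 hp
  have hp2' : ¬ (p : ℤ) ∣ 2 := by
    intro h
    have h2 : p ∣ 2 := by exact_mod_cast h
    exact hp2 ((Nat.prime_dvd_prime_iff_eq hp Nat.prime_two).1 h2)
  unfold gs
  rw [sum_range_mul', Finset.sum_comm]
  have h1 : ∀ y ∈ Finset.range (p * q), (∑ z ∈ Finset.range p,
      ee (p * (p * q)) (x * ((y + p * q * z : ℕ) : ℤ) ^ 2)) =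
      if (p : ℤ) ∣ y then p * ee (p * (p * q)) (x * (y : ℤ) ^ 2) else 0 := by
    intro y _
    have h2 : ∀ z : ℕ, ee (p * (p * q)) (x * ((y + p * q * z : ℕ) : ℤ) ^ 2) =
        ee (p * (p * q)) (x * (y : ℤ) ^ 2) * ee p (z * (2 * x * y)) := by
      intro z
      have e1 : ee p (z * (2 * x * y)) = ee (p * (p * q)) ((p * q : ℕ) * (z * (2 * x * y))) := by
        rw [mul_comm p (p * q), ee_mul_cancel (Nat.mul_pos hp.pos hq)]
      rw [e1, ← ee_add]
      apply ee_congr (Nat.mul_pos hp.pos (Nat.mul_pos hp.pos hq))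
      refine ⟨x * q * z ^ 2, ?_⟩
      push_cast; ring
    simp_rw [h2]
    rw [← Finset.mul_sum, sum_ee p hp1]
    have : ((p : ℤ) ∣ 2 * x * y) ↔ (p : ℤ) ∣ y := by
      constructor
      · intro h
        rcases hpi.dvd_or_dvd h with h | h
        · rcases hpi.dvd_or_dvd h with h | h
          · exact absurd h hp2'
          · exact absurd h hx
        · exact h
      · exact fun h => Dvd.dvd.mul_left h _
    simp only [this]
    split_ifs
    · ring
    · ring
  rw [Finset.sum_congr rfl h1, mul_comm p q, sum_range_mul', Finset.mul_sum]
  apply Finset.sum_congr rfl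
  intro i _
  rw [Finset.sum_eq_single 0]
  · rw [if_pos (by push_cast; exact ⟨i, by ring⟩)]
    congr 1
    have : x * ((0 + p * i : ℕ) : ℤ) ^ 2 = ((p * p : ℕ) : ℤ) * (x * (i : ℤ) ^ 2) := by
      push_cast; ring
    rw [this, show p * (q * p) = (p * p) * q by ring, ee_mul_cancel (Nat.mul_pos hp.pos hp.pos)]
  · intro j hj hj0
    rw [if_neg]
    intro h
    have h' : p ∣ j + p * i := by exact_mod_cast h
    have : p ∣ j := (Nat.dvd_add_left ⟨i, rfl⟩).1 h'
    have := Nat.le_of_dvd (Nat.pos_of_ne_zero hj0) this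
    simp at hj; omega
  · intro h; simp at h; omega

open scoped NumberTheorySymbols

lemma gs_prime {p : ℕ} (hp : p.Prime) (hp2 : p ≠ 2) {x : ℤ} (hx : IsCoprime x (p : ℤ)) :
    gs p x = (J(x | p) : ℤ) * gs p 1 := by
  have : Fact p.Prime := ⟨hp⟩
  have key : ∀ w : ℤ, ¬ (p : ℤ) ∣ w → gs p w = gaussSum
      ((quadraticChar (ZMod p)).ringHomComp (Int.castRingHom ℂ))
      (AddChar.mulShift ZMod.stdAddChar (w : ZMod p)) := by
    intro w hw
    rw [gs_eq]
    have e1 : ∑ y : ZMod p, (ZMod.stdAddChar ((w : ZMod p) * y ^ 2) : ℂ) =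
        ∑ z : ZMod p, ((quadraticChar (ZMod p) z : ℂ) + 1) * ZMod.stdAddChar ((w : ZMod p) * z) := by
      rw [← Finset.sum_fiberwise (s := Finset.univ) (g := fun y : ZMod p => y ^ 2)]
      apply Finset.sum_congr rfl
      intro z _
      have h1 := quadraticChar_card_sqrts (F := ZMod p) (by rwa [ZMod.ringChar_zmod_n]) z
      have h2 : ((quadraticChar (ZMod p) z : ℂ) + 1) =
          (Finset.univ.filter (fun y : ZMod p => y ^ 2 = z)).card := by
        have h3 : {x : ZMod p | x ^ 2 = z}.toFinset =
          Finset.univ.filter (fun y : ZMod p => y ^ 2 = z) := by ext; simp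
        rw [h3] at h1
        have := congrArg (Int.cast : ℤ → ℂ) h1
        push_cast at this
        exact this.symm
      rw [h2, ← nsmul_eq_mul, ← Finset.sum_const]
      apply Finset.sum_congr rfl
      intro y hy
      rw [(Finset.mem_filter.1 hy).2]
    rw [e1]
    simp_rw [add_mul, one_mul]
    rw [Finset.sum_add_distrib]
    have e2 := AddChar.sum_mulShift (w : ZMod p) (ZMod.isPrimitive_stdAddChar p)
    rw [if_neg (by rwa [ZMod.intCast_zmod_eq_zero_iff_dvd])] at e2
    simp_rw [mul_comm (w : ZMod p)]
    rw [e2]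
    simp only [Nat.cast_zero, add_zero]
    unfold gaussSum
    apply Finset.sum_congr rfl
    intro z _
    rw [AddChar.mulShift_apply, mul_comm z]
    rfl
  have hnx : ¬ (p : ℤ) ∣ x := by
    intro h
    have := hx.isUnit_of_dvd' h dvd_rfl
    exact (Nat.prime_iff_prime_int.1 hp).not_isUnit this
  have hn1 : ¬ (p : ℤ) ∣ 1 := fun h => (Nat.prime_iff_prime_int.1 hp).not_isUnit (isUnit_of_dvd_one h)
  rw [key x hnx, key 1 hn1]
  have hxu : (x : ZMod p) ≠ 0 := by rwa [Ne, ZMod.intCast_zmod_eq_zero_iff_dvd]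
  have h3 := gaussSum_mulShift ((quadraticChar (ZMod p)).ringHomComp (Int.castRingHom ℂ))
    (ZMod.stdAddChar (N := p)) (Units.mk0 (x : ZMod p) hxu)
  simp only [Units.val_mk0] at h3
  rw [Int.cast_one, AddChar.mulShift_one, ← h3, ← mul_assoc]
  have : (((J(x | p) : ℤ) : ℂ)) * ((quadraticChar (ZMod p)).ringHomComp (Int.castRingHom ℂ)) (x : ZMod p) = 1 := by
    rw [← jacobiSym.legendreSym.to_jacobiSym, legendreSym]
    rw [MulChar.ringHomComp_apply, eq_intCast, ← Int.cast_mul, ← sq, quadraticChar_sq_one hxu,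
      Int.cast_one]
  rw [this, one_mul]

lemma gs_mul {a b : ℕ} (ha : 1 ≤ a) (hb : 1 ≤ b) (hab : Nat.Coprime a b) {u v : ℤ}
    (h : u * a + v * b = 1) (x : ℤ) : gs (a * b) x = gs a (v * x) * gs b (u * x) := by
  have : NeZero a := ⟨by omega⟩
  have : NeZero b := ⟨by omega⟩
  have : NeZero (a * b) := ⟨(Nat.mul_pos ha hb).ne'⟩
  rw [gs_eq a, gs_eq b, Finset.sum_mul_sum, ← Finset.sum_product', Finset.univ_product_univ,
    ← (ZMod.chineseRemainder hab).toEquiv.sum_comp, ← sum_range_zmod]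
  unfold gs
  apply Finset.sum_congr rfl
  intro y _
  rw [ee_split ha hb h, ee_eq, ee_eq]
  simp
  congr 2 <;> ring

lemma gs_jacobi (q : ℕ) : Odd q → ∀ x : ℤ, IsCoprime x (q : ℤ) →
    gs q x = (J(x | q) : ℤ) * gs q 1 := by
  induction q using Nat.recOnPrimeCoprime with
  | zero => intro h; exact absurd h (by decide)
  | prime_pow p n hp =>
    intro ho x hx
    induction n using Nat.strong_induction_on generalizing x with
    | _ n IH =>
    match n with
    | 0 => simp [gs, ee]
    | 1 =>
      rw [pow_one] at *
      exact gs_prime hp (by rintro rfl; exact absurd ho (by decide)) hx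
    | k + 2 =>
      have hop : Odd p := (Nat.odd_pow_iff (by omega)).1 ho
      have hp2 : p ≠ 2 := by rintro rfl; exact absurd hop (by decide)
      have hxp : IsCoprime x (p : ℤ) := by
        rw [Nat.cast_pow] at hx
        exact (IsCoprime.pow_right_iff (by omega)).1 hx
      have nd : ∀ w : ℤ, IsCoprime w (p : ℤ) → ¬ (p : ℤ) ∣ w := by
        intro w hw h
        exact (Nat.prime_iff_prime_int.1 hp).not_isUnit (hw.isUnit_of_dvd' h dvd_rfl)
      have e : p ^ (k + 2) = p * (p * p ^ k) := by ring
      have hxk : IsCoprime x ((p ^ k : ℕ) : ℤ) := by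
        rw [Nat.cast_pow]; exact hxp.pow_right
      have hJ : J(x | p ^ (k + 2)) = J(x | p ^ k) := by
        rw [jacobiSym.pow_right, jacobiSym.pow_right, pow_add,
          jacobiSym.sq_one (Int.isCoprime_iff_gcd_eq_one.1 hxp), mul_one]
      rw [hJ, e, gs_sq_mul hp hp2 (Nat.pos_of_ne_zero (pow_ne_zero _ hp.ne_zero)) (nd x hxp),
        gs_sq_mul hp hp2 (Nat.pos_of_ne_zero (pow_ne_zero _ hp.ne_zero)) (nd 1 isCoprime_one_left),
        IH k (by omega) (hop.pow) x hxk]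
      ring
  | coprime a b ha hb hab iha ihb =>
    intro ho x hx
    rw [Nat.odd_mul] at ho
    have : NeZero a := ⟨by omega⟩
    have : NeZero b := ⟨by omega⟩
    obtain ⟨u, v, h⟩ := Nat.isCoprime_iff_coprime.2 hab
    rw [Nat.cast_mul] at hx
    have hxa : IsCoprime x (a : ℤ) := hx.of_mul_right_left
    have hxb : IsCoprime x (b : ℤ) := hx.of_mul_right_right
    have hva : IsCoprime v (a : ℤ) := ⟨b, u, by linarith⟩
    have hub : IsCoprime u (b : ℤ) := ⟨a, v, by linarith⟩
    rw [gs_mul ha.le hb.le hab h, gs_mul ha.le hb.le hab h, mul_one, mul_one]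
    rw [iha ho.1 _ (hva.mul_left hxa), ihb ho.2 _ (hub.mul_left hxb), iha ho.1 _ hva,
      ihb ho.2 _ hub, jacobiSym.mul_left, jacobiSym.mul_left, jacobiSym.mul_right]
    push_cast
    ring

lemma gs_norm (q : ℕ) (hq : Odd q) : ‖gs q 1‖ = Real.sqrt q := by
  have : NeZero q := ⟨hq.pos.ne'⟩
  have h2 : IsUnit (2 : ZMod q) := by
    have : IsUnit ((2 : ℕ) : ZMod q) := by
      rw [ZMod.isUnit_iff_coprime]; exact Nat.coprime_two_left.2 hq
    exact_mod_cast this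
  have key : gs q 1 * (starRingEnd ℂ) (gs q 1) = q := by
    rw [gs_eq, map_sum, Finset.sum_mul_sum, Finset.sum_comm]
    have h1 : ∀ z : ZMod q, ∑ y : ZMod q, (ZMod.stdAddChar (((1 : ℤ) : ZMod q) * y ^ 2) : ℂ) *
        (starRingEnd ℂ) (ZMod.stdAddChar (((1 : ℤ) : ZMod q) * z ^ 2)) =
        ∑ k : ZMod q, ZMod.stdAddChar (k ^ 2) * ZMod.stdAddChar (z * (2 * k)) := by
      intro z
      rw [← Equiv.sum_comp (Equiv.addRight z)]
      apply Finset.sum_congr rfl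
      intro k _
      rw [← AddChar.map_neg_eq_conj, ← AddChar.map_add_eq_mul, ← AddChar.map_add_eq_mul]
      congr 1
      simp; ring
    simp_rw [h1]
    rw [Finset.sum_comm]
    simp_rw [← Finset.mul_sum]
    have h3 : ∀ k : ZMod q, ∑ z : ZMod q, (ZMod.stdAddChar (z * (2 * k)) : ℂ) =
        if k = 0 then (q : ℂ) else 0 := by
      intro k
      rw [AddChar.sum_mulShift _ (ZMod.isPrimitive_stdAddChar q), ZMod.card]
      simp only [h2.mul_right_eq_zero]
      split_ifs <;> simp
    simp_rw [h3]
    simp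
  rw [Complex.mul_conj, Complex.normSq_eq_norm_sq] at key
  have : ‖gs q 1‖ ^ 2 = q := by exact_mod_cast key
  rw [← this, Real.sqrt_sq (norm_nonneg _)]

lemma salie_bound (q : ℕ) [NeZero q] (hq : Odd q) (a b : (ZMod q)ˣ) :
    ‖∑ t : (ZMod q)ˣ, ((J(((t : ZMod q).val : ℤ) | q) : ℤ) : ℂ) *
      ZMod.stdAddChar (N := q) ((a : ZMod q) * t + b * ((t⁻¹ : (ZMod q)ˣ) : ZMod q))‖ ≤
      Real.sqrt q * (Finset.univ.filter (fun y : ZMod q => (b : ZMod q) * y ^ 2 = a)).card := by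
  have h2 : IsUnit (2 : ZMod q) := by
    have : IsUnit ((2 : ℕ) : ZMod q) := by
      rw [ZMod.isUnit_iff_coprime]; exact Nat.coprime_two_left.2 hq
    exact_mod_cast this
  have hval : ∀ t : (ZMod q)ˣ, IsCoprime ((t : ZMod q).val : ℤ) (q : ℤ) := by
    intro t
    rw [Nat.isCoprime_iff_coprime]
    exact ZMod.val_coe_unit_coprime t
  set jb : ℤ := J((((-b : (ZMod q)ˣ) : ZMod q).val : ℤ) | q) with hjb
  have hjb1 : ‖(jb : ℂ)‖ = 1 := by
    rcases jacobiSym.eq_one_or_neg_one (Int.isCoprime_iff_gcd_eq_one.1 (hval (-b))) with h | h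
    · rw [hjb, h]; simp
    · rw [hjb, h]; simp
  set f : ZMod q → ℂ := fun t => ∑ y : ZMod q,
    ZMod.stdAddChar (N := q) ((a : ZMod q) * t - b * t * y ^ 2 - 2 * b * y) with hf
  have h1 : ∀ t : (ZMod q)ˣ, ((J(((t : ZMod q).val : ℤ) | q) : ℤ) : ℂ) *
      ZMod.stdAddChar (N := q) ((a : ZMod q) * t + b * ((t⁻¹ : (ZMod q)ˣ) : ZMod q)) * (jb * gs q 1) =
      f t := by
    intro t
    have hco := (hval (-b)).mul_left (hval t)
    have e1 := gs_jacobi q hq _ hco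
    rw [jacobiSym.mul_left, ← hjb, gs_eq] at e1
    push_cast at e1
    simp only [ZMod.natCast_zmod_val] at e1
    rw [← Equiv.sum_comp (Equiv.addRight ((t⁻¹ : (ZMod q)ˣ) : ZMod q))] at e1
    rw [show ∀ x y z w : ℂ, x * y * (z * w) = y * (z * x * w) by intros; ring]
    simp only [Units.val_neg] at hjb e1 ⊢
    rw [← e1, Finset.mul_sum, hf]
    apply Finset.sum_congr rfl
    intro y _
    rw [← AddChar.map_add_eq_mul]
    congr 1
    have ht : (t : ZMod q) * ((t⁻¹ : (ZMod q)ˣ) : ZMod q) = 1 := Units.mul_inv t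
    simp only [Equiv.coe_addRight]
    linear_combination (-(b : ZMod q) * (2 * y + ((t⁻¹ : (ZMod q)ˣ) : ZMod q))) * ht
  have h3 : ∑ t : (ZMod q)ˣ, f t = ∑ t : ZMod q, f t := by
    apply Fintype.sum_of_injective (fun t : (ZMod q)ˣ => (t : ZMod q)) Units.val_injective
    · intro t ht
      have hnu : ¬ IsUnit t := fun ⟨u, hu⟩ => ht ⟨u, hu⟩
      rw [isUnit_iff_mem_nonZeroDivisors_of_finite, mem_nonZeroDivisors_iff_right] at hnu
      push Not at hnu
      obtain ⟨s, hs, hs0⟩ := hnu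
      have e1 : f t = ZMod.stdAddChar (N := q) (-(2 * b * s)) * f t := by
        conv_lhs => rw [hf]
        simp only
        rw [← Equiv.sum_comp (Equiv.addRight s), hf, Finset.mul_sum]
        apply Finset.sum_congr rfl
        intro y _
        rw [← AddChar.map_add_eq_mul]
        congr 1
        simp only [Equiv.coe_addRight]
        linear_combination (-(b : ZMod q) * (2 * y + s)) * hs
      by_contra hne
      have e2 : (ZMod.stdAddChar (N := q) (-(2 * b * s)) : ℂ) = 1 := by
        apply mul_right_cancel₀ hne
        rw [one_mul]; exact e1.symm
      rw [← (ZMod.stdAddChar (N := q)).map_zero_eq_one, ZMod.injective_stdAddChar.eq_iff,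
        neg_eq_zero, mul_assoc, h2.mul_right_eq_zero, b.isUnit.mul_right_eq_zero] at e2
      exact hs0 e2
    · intro t; rfl
  have h4 : ∑ t : ZMod q, f t = ∑ y : ZMod q, if (b : ZMod q) * y ^ 2 = a then
      (q : ℂ) * ZMod.stdAddChar (N := q) (-(2 * b * y)) else 0 := by
    rw [hf]
    simp only
    rw [Finset.sum_comm]
    apply Finset.sum_congr rfl
    intro y _
    have e1 : ∀ t : ZMod q, (ZMod.stdAddChar (N := q) ((a : ZMod q) * t - b * t * y ^ 2 - 2 * b * y) : ℂ) =
        ZMod.stdAddChar (N := q) (t * (a - b * y ^ 2)) * ZMod.stdAddChar (N := q) (-(2 * b * y)) := by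
      intro t
      rw [← AddChar.map_add_eq_mul]; congr 1; ring
    simp_rw [e1]
    rw [← Finset.sum_mul, AddChar.sum_mulShift _ (ZMod.isPrimitive_stdAddChar q), ZMod.card]
    simp only [sub_eq_zero, eq_comm (a := (a : ZMod q))]
    split_ifs <;> simp
  set T := ∑ t : (ZMod q)ˣ, ((J(((t : ZMod q).val : ℤ) | q) : ℤ) : ℂ) *
      ZMod.stdAddChar (N := q) ((a : ZMod q) * t + b * ((t⁻¹ : (ZMod q)ˣ) : ZMod q)) with hT
  have h5 : T * (jb * gs q 1) = ∑ y : ZMod q, if (b : ZMod q) * y ^ 2 = a then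
      (q : ℂ) * ZMod.stdAddChar (N := q) (-(2 * b * y)) else 0 := by
    rw [← h4, ← h3, hT, Finset.sum_mul]
    exact Finset.sum_congr rfl (fun t _ => h1 t)
  have h6 : ‖T‖ * Real.sqrt q ≤ q * (Finset.univ.filter (fun y : ZMod q => (b : ZMod q) * y ^ 2 = a)).card := by
    rw [← gs_norm q hq, ← one_mul ‖gs q 1‖, ← hjb1, ← norm_mul, ← norm_mul, h5, ← Finset.sum_filter]
    refine (norm_sum_le _ _).trans ?_
    have : ∀ y : ZMod q, ‖(q : ℂ) * ZMod.stdAddChar (N := q) (-(2 * b * y))‖ = q := by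
      intro y
      rw [norm_mul, AddChar.norm_apply]
      simp
    simp_rw [this]
    rw [Finset.sum_const, nsmul_eq_mul, mul_comm]
  have hqpos : 0 < Real.sqrt q := Real.sqrt_pos.2 (by exact_mod_cast hq.pos)
  have hqq : (q : ℝ) = Real.sqrt q * Real.sqrt q := (Real.mul_self_sqrt (by positivity)).symm
  nth_rewrite 2 [hqq] at h6
  apply le_of_mul_le_mul_right _ hqpos
  linarith

lemma gcd_inj {q : ℕ} (hq : Odd q) {Y Y' : ℤ} (h : (q : ℤ) ∣ (Y - 1) * (Y + 1))
    (h' : (q : ℤ) ∣ (Y' - 1) * (Y' + 1)) (hg : Int.gcd (Y - 1) q = Int.gcd (Y' - 1) q) :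
    (q : ℤ) ∣ Y - Y' := by
  set g := Int.gcd (Y - 1) q with hgd
  have hq0 : (q : ℤ) ≠ 0 := by exact_mod_cast hq.pos.ne'
  have hgpos : 0 < g := Int.gcd_pos_of_ne_zero_right _ hq0
  have hgq : (g : ℤ) ∣ q := Int.gcd_dvd_right _ _
  obtain ⟨k, hk⟩ := hgq
  have hg0 : (g : ℤ) ≠ 0 := by positivity
  have aux : ∀ W : ℤ, (q : ℤ) ∣ (W - 1) * (W + 1) → Int.gcd (W - 1) q = g →
      (g : ℤ) ∣ W - 1 ∧ k ∣ W + 1 := by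
    intro W hW hWg
    have hgW : (g : ℤ) ∣ W - 1 := hWg ▸ Int.gcd_dvd_left _ _
    refine ⟨hgW, ?_⟩
    obtain ⟨l, hl⟩ := hgW
    have hcop : IsCoprime l k := by
      rw [Int.isCoprime_iff_gcd_eq_one]
      rw [hl, hk, Int.gcd_mul_left] at hWg
      rw [Int.natAbs_natCast] at hWg
      exact Nat.eq_of_mul_eq_mul_left hgpos (by rw [mul_one]; exact hWg)
    rw [hk, hl, mul_assoc] at hW
    have := (mul_dvd_mul_iff_left hg0).1 hW
    exact hcop.symm.dvd_of_dvd_mul_left this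
  obtain ⟨a1, a2⟩ := aux Y h rfl
  obtain ⟨b1, b2⟩ := aux Y' h' hg.symm
  have hcop : IsCoprime (g : ℤ) k := by
    rw [Int.isCoprime_iff_gcd_eq_one]
    set e := Int.gcd (g : ℤ) k with he
    have e1 : (e : ℤ) ∣ g := Int.gcd_dvd_left _ _
    have e2 : (e : ℤ) ∣ k := Int.gcd_dvd_right _ _
    have e3 : (e : ℤ) ∣ 2 := by
      have := dvd_sub (e2.trans a2) (e1.trans a1)
      simpa [show Y + 1 - (Y - 1) = 2 by ring] using this
    have e4 : (e : ℤ) ∣ q := e1.trans ⟨k, hk⟩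
    have e3' : e ∣ 2 := by exact_mod_cast e3
    have e4' : e ∣ q := by exact_mod_cast e4
    have : e ∣ Nat.gcd 2 q := Nat.dvd_gcd e3' e4'
    rw [Nat.coprime_two_left.2 hq] at this
    exact Nat.dvd_one.1 this
  rw [hk]
  apply hcop.mul_dvd
  · have := dvd_sub a1 b1
    simpa using this
  · have := dvd_sub a2 b2
    simpa using this

lemma card_sqrt_one (q : ℕ) [NeZero q] (hq : Odd q) :
    (Finset.univ.filter (fun y : ZMod q => y ^ 2 = 1)).card ≤ q.divisors.card := by
  have hd : ∀ y : ZMod q, y ^ 2 = 1 → (q : ℤ) ∣ ((y.val : ℤ) - 1) * ((y.val : ℤ) + 1) := by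
    intro y hy
    rw [← ZMod.intCast_zmod_eq_zero_iff_dvd]
    push_cast
    simp only [ZMod.natCast_val, ZMod.cast_id', id_eq]
    linear_combination hy
  apply Finset.card_le_card_of_injOn (fun y => Int.gcd ((y.val : ℤ) - 1) q)
  · intro y hy
    simp only [Finset.mem_coe, Nat.mem_divisors]
    refine ⟨?_, hq.pos.ne'⟩
    have := Int.gcd_dvd_right ((y.val : ℤ) - 1) (q : ℤ)
    exact_mod_cast this
  · intro y hy z hz hyz
    simp only [Finset.coe_filter, Finset.mem_univ, true_and, Set.mem_ofPred_eq] at hy hz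
    have := gcd_inj hq (hd y hy) (hd z hz) hyz
    rw [← ZMod.intCast_zmod_eq_zero_iff_dvd] at this
    push_cast at this
    simp only [ZMod.natCast_val, ZMod.cast_id', id_eq] at this
    exact sub_eq_zero.1 this

lemma card_sol (q : ℕ) [NeZero q] (hq : Odd q) (a b : (ZMod q)ˣ) :
    (Finset.univ.filter (fun y : ZMod q => (b : ZMod q) * y ^ 2 = a)).card ≤ q.divisors.card := by
  refine le_trans ?_ (card_sqrt_one q hq)
  rcases Finset.eq_empty_or_nonempty
    (Finset.univ.filter (fun y : ZMod q => (b : ZMod q) * y ^ 2 = a)) with h | ⟨y0, hy0⟩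
  · rw [h]; simp
  · simp only [Finset.mem_filter, Finset.mem_univ, true_and] at hy0
    have hu : IsUnit y0 := by
      have : IsUnit ((b : ZMod q) * y0 ^ 2) := hy0 ▸ a.isUnit
      exact (isUnit_pow_iff (two_ne_zero)).1 (isUnit_of_mul_isUnit_right this)
    obtain ⟨u, rfl⟩ := hu
    apply Finset.card_le_card_of_injOn (fun y => y * ((u⁻¹ : (ZMod q)ˣ) : ZMod q))
    · intro y hy
      simp only [Finset.coe_filter, Finset.mem_univ, true_and, Set.mem_ofPred_eq] at hy ⊢
      have h1 : (b : ZMod q) * y ^ 2 = b * (u : ZMod q) ^ 2 := by rw [hy, hy0]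
      have h2 := b.isUnit.mul_left_cancel h1
      rw [mul_pow, h2, ← mul_pow, Units.mul_inv, one_pow]
    · intro y _ z _ h
      exact (u⁻¹).isUnit.mul_right_cancel h

/-- One term of the Kloosterman sum, indexed by units. -/
noncomputable def kterm (m n : ℤ) (c : ℕ) (x : (ZMod c)ˣ) : ℂ :=
  ee (24 * c) (zDed ((x : ZMod c).val : ℤ) c +
    24 * ((m - 1) * (((x⁻¹ : (ZMod c)ˣ) : ZMod c).val : ℤ) + (n - 1) * ((x : ZMod c).val : ℤ)))

lemma zDed_mod (d c : ℕ) (hc : 1 ≤ c) : zDed ((d % c : ℕ) : ℤ) c = zDed d c := by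
  have : (d : ℤ) = ((d % c : ℕ) : ℤ) + ((d / c : ℕ) : ℤ) * c := by
    have := Nat.mod_add_div d c
    have h2 : ((d % c : ℕ) : ℤ) + c * ((d / c : ℕ) : ℤ) = d := by exact_mod_cast this
    linarith
  conv_rhs => rw [this]
  rw [zDed_add _ _ _ hc]

lemma klooS_norm (m n : ℤ) (c : ℕ) [NeZero c] :
    ‖klooS m n c‖ = ‖∑ x : (ZMod c)ˣ, kterm m n c x‖ := by
  have hc : 1 ≤ c := Nat.pos_of_ne_zero (NeZero.ne c)
  have hc0 : (c : ℂ) ≠ 0 := by exact_mod_cast NeZero.ne c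
  unfold klooS
  have h1 : Complex.exp ((Real.pi : ℂ) * Complex.I / 4) =
    Complex.exp (((Real.pi / 4 : ℝ) : ℂ) * Complex.I) := by
    congr 1; push_cast; ring
  rw [norm_mul, h1, Complex.norm_exp_ofReal_mul_I, one_mul]
  congr 1
  refine Finset.sum_bij (fun d hd => ZMod.unitOfCoprime d (Finset.mem_filter.1 hd).2) ?_ ?_ ?_ ?_
  · intro d _; exact Finset.mem_univ _
  · intro d hd e he h
    have h2 : (d : ZMod c) = (e : ZMod c) := by
      have := congrArg (Units.val) h
      simpa only [ZMod.coe_unitOfCoprime] using this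
    rw [ZMod.natCast_eq_natCast_iff] at h2
    simp only [Finset.mem_filter, Finset.mem_Icc] at hd he
    have h3 := (Nat.modEq_iff_dvd).1 h2
    obtain ⟨k, hk⟩ := h3
    have : k = 0 := by
      have hlt : c * k < c := by omega
      have hgt : -(c : ℤ) < c * k := by omega
      have hcc : (0 : ℤ) < c := by exact_mod_cast hc
      have a1 : k < 1 := by nlinarith
      have a2 : -1 < k := by nlinarith
      omega
    subst this
    omega
  · intro x _
    have hv := ZMod.val_coe_unit_coprime x
    by_cases h0 : (x : ZMod c).val = 0
    · refine ⟨c, ?_, ?_⟩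
      · simp only [Finset.mem_filter, Finset.mem_Icc]
        refine ⟨⟨hc, le_rfl⟩, ?_⟩
        rw [h0] at hv
        have : c = 1 := by simpa using hv
        simp [this]
      · ext
        rw [ZMod.coe_unitOfCoprime, ZMod.natCast_self]
        exact ((ZMod.val_eq_zero _).1 h0).symm
    · refine ⟨(x : ZMod c).val, ?_, ?_⟩
      · simp only [Finset.mem_filter, Finset.mem_Icc]
        exact ⟨⟨Nat.pos_of_ne_zero h0, (ZMod.val_lt _).le⟩, hv⟩
      · ext
        rw [ZMod.coe_unitOfCoprime, ZMod.natCast_zmod_val]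
  · intro d hd
    have hcop := (Finset.mem_filter.1 hd).2
    unfold kterm
    rw [← ZMod.inv_coe_unit, ZMod.coe_unitOfCoprime, ZMod.val_natCast, zDed_mod d c hc]
    have hs := zDed_eq d c hc
    have hs' : (dedekindS d c : ℂ) = (zDed d c : ℂ) / (12 * c) := by
      rw [eq_div_iff (mul_ne_zero (by norm_num) hc0)]
      have : ((12 * c * dedekindS d c : ℝ) : ℂ) = ((zDed d c : ℝ) : ℂ) := by rw [hs]
      push_cast at this
      rw [← this]; ring
    have e1 : ee (24 * c) (zDed (d : ℤ) c + 24 * ((m - 1) * ((((d : ZMod c))⁻¹).val : ℤ) + (n - 1) * ((d % c : ℕ) : ℤ))) = ee (24 * c) (zDed (d : ℤ) c + 24 * ((m - 1) * ((((d : ZMod c))⁻¹).val : ℤ) + (n - 1) * (d : ℤ))) := by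
      apply ee_congr (by omega)
      have := Nat.mod_add_div d c
      have h2 : ((d % c : ℕ) : ℤ) + c * ((d / c : ℕ) : ℤ) = d := by exact_mod_cast this
      refine ⟨- (n - 1) * ((d / c : ℕ) : ℤ), ?_⟩
      push_cast at h2 ⊢
      linear_combination 24 * (n - 1) * h2
    rw [e1, ee_add]
    congr 1
    · unfold ee
      rw [hs']
      congr 1
      push_cast
      field_simp
      ring
    · unfold ee eFun
      congr 1
      push_cast
      field_simp

lemma kterm_formula (m n : ℤ) (c : ℕ) [NeZero c] (x : (ZMod c)ˣ) (d d' : ℕ)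
    (hd : Nat.Coprime d (6 * c)) (hdx : (d : ZMod c) = x)
    (hdd : (24 * c : ℤ) ∣ (d : ℤ) * d' - 1) :
    kterm m n c x = ee (24 * c) ((24 * n - 23) * d + (24 * m - 23) * d') *
      ee 24 (c * d' - 12 - 9 * d' - 6 * J(c | d) * d') := by
  have hc : 1 ≤ c := Nat.pos_of_ne_zero (NeZero.ne c)
  have e24 : ee 24 (c * d' - 12 - 9 * d' - 6 * J(c | d) * d') =
      ee (24 * c) (c * (c * d' - 12 - 9 * d' - 6 * J(c | d) * d')) := by
    rw [mul_comm 24 c, ee_mul_cancel hc]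
  rw [e24, ← ee_add]
  unfold kterm
  apply ee_congr (by omega)
  have hxv : (x : ZMod c).val = d % c := by rw [← hdx, ZMod.val_natCast]
  rw [hxv, zDed_mod d c hc]
  have hmod : ((d % c : ℕ) : ℤ) = d - c * ((d / c : ℕ) : ℤ) := by
    have := Nat.mod_add_div d c
    have h2 : ((d % c : ℕ) : ℤ) + c * ((d / c : ℕ) : ℤ) = d := by exact_mod_cast this
    linarith
  have hinv : (c : ℤ) ∣ (((x⁻¹ : (ZMod c)ˣ) : ZMod c).val : ℤ) - d' := by
    rw [← ZMod.intCast_zmod_eq_zero_iff_dvd]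
    push_cast
    rw [ZMod.natCast_zmod_val]
    have h1 : (c : ℤ) ∣ (d : ℤ) * d' - 1 := (Dvd.intro_left _ rfl).trans hdd
    rw [← ZMod.intCast_zmod_eq_zero_iff_dvd] at h1
    push_cast at h1
    rw [hdx] at h1
    apply x.isUnit.mul_left_cancel
    rw [mul_sub, Units.mul_inv]
    linear_combination -h1
  obtain ⟨k1, hk1⟩ := zDed_formula hc hd
  obtain ⟨k2, hk2⟩ := hdd
  obtain ⟨k3, hk3⟩ := hinv
  refine ⟨d' * k1 - k2 * zDed d c + d * k2 - 12 * c * k2 + (m - 1) * k3 - (n - 1) * ((d / c : ℕ) : ℤ), ?_⟩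
  rw [hmod]
  push_cast
  linear_combination (d' : ℤ) * hk1 + 24 * (m - 1) * hk3 + (- zDed d c + d - 12 * c) * hk2

lemma ee4_sign (J : ℤ) (hJ : J = 1 ∨ J = -1) (k : ℤ) (hk : Odd k) :
    ee 4 (-J * k) = (J : ℂ) * ee 4 (-k) := by
  rcases hJ with h | h
  · rw [h]; simp
  · rw [h]
    obtain ⟨l, rfl⟩ := hk
    have e1 : ee 4 (- -1 * (2 * l + 1)) = ee 4 (2 + -(2 * l + 1)) := by
      apply ee_congr (by norm_num); exact ⟨l, by push_cast; ring⟩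
    rw [e1, ee_add]
    congr 1
    unfold ee
    have : 2 * (Real.pi : ℂ) * Complex.I * ((2 : ℤ) : ℂ) / ((4 : ℕ) : ℂ) = Real.pi * Complex.I := by
      push_cast; ring
    rw [this, Complex.exp_pi_mul_I]; simp

/-- the sign in quadratic reciprocity -/
def qsgn (a b : ℕ) : ℤ := if a % 4 = 3 ∧ b % 4 = 3 then -1 else 1

lemma qsgn_spec {a b : ℕ} (ha : Odd a) (hb : Odd b) : J(a | b) = qsgn a b * J(b | a) := by
  rw [← jacobiSym.quadratic_reciprocity_if (Nat.odd_iff.1 ha) (Nat.odd_iff.1 hb)]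
  unfold qsgn
  split_ifs <;> simp

lemma kterm_split (m n : ℤ) (c1 c0 : ℕ) [NeZero c1] [NeZero c0] (hco : Odd c0)
    {u v : ℤ} (huv : u * ((24 * c1 : ℕ) : ℤ) + v * c0 = 1)
    (x : (ZMod (c1 * c0))ˣ) (d d' ρ ρ' : ℕ)
    (hd : Nat.Coprime d (6 * (c1 * c0))) (hdx : (d : ZMod (c1 * c0)) = x)
    (hdd : (24 * (c1 * c0 : ℕ) : ℤ) ∣ (d : ℤ) * d' - 1)
    (h1 : d ≡ ρ [MOD 24 * c1]) (h2 : d' ≡ ρ' [MOD 24 * c1]) :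
    kterm m n (c1 * c0) x =
      (ee (24 * c1) (v * ((24 * n - 23) * ρ + (24 * m - 23) * ρ')) *
      ee 24 ((c1 * c0 : ℕ) * ρ' - 12 - 9 * ρ') * ee 4 (-ρ') * (J(c1 | ρ) : ℤ) * (qsgn c0 ρ : ℤ)) *
      ((J(d | c0) : ℤ) * ee c0 (u * ((24 * n - 23) * d + (24 * m - 23) * d'))) := by
  have hc1 : 1 ≤ c1 := Nat.pos_of_ne_zero (NeZero.ne c1)
  have hc0 : 1 ≤ c0 := Nat.pos_of_ne_zero (NeZero.ne c0)
  have hodd : Odd d := by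
    have : Nat.Coprime d 2 := Nat.Coprime.coprime_dvd_right ⟨3 * (c1 * c0), by ring⟩ hd
    rwa [Nat.coprime_comm, Nat.coprime_two_left] at this
  have hodd' : Odd (d' : ℤ) := by
    have h2 : (2 : ℤ) ∣ (d : ℤ) * d' - 1 :=
      (Dvd.intro (12 * ((c1 * c0 : ℕ) : ℤ)) (by ring)).trans hdd
    have h3 : Odd ((d : ℤ) * d') := by
      rw [← Int.not_even_iff_odd, even_iff_two_dvd]; omega
    exact (Int.odd_mul.1 h3).2
  have hρodd : Odd ρ := by
    have : d % 2 = ρ % 2 := h1.of_dvd (⟨12 * c1, by ring⟩)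
    rw [Nat.odd_iff] at hodd ⊢; omega
  have hdc : Nat.Coprime d (c1 * c0) := Nat.Coprime.coprime_mul_left_right hd
  rw [kterm_formula m n (c1 * c0) x d d' hd hdx hdd]
  have hz1 : ((24 * c1 : ℕ) : ℤ) ∣ (d : ℤ) - ρ := (Nat.modEq_iff_dvd.1 h1.symm)
  have hz2 : ((24 * c1 : ℕ) : ℤ) ∣ (d' : ℤ) - ρ' := (Nat.modEq_iff_dvd.1 h2.symm)
  -- Jacobi
  have hJ1 : J(((c1 * c0 : ℕ) : ℤ) | d) = J(c1 | ρ) * (qsgn c0 ρ * J(d | c0)) := by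
    rw [Nat.cast_mul, jacobiSym.mul_left]
    congr 1
    · rw [jacobiSym.mod_right' c1 hodd, jacobiSym.mod_right' c1 hρodd]
      congr 1
      exact h1.of_dvd ⟨6, by ring⟩
    · rw [qsgn_spec hco hodd]
      congr 1
      unfold qsgn
      have : d % 4 = ρ % 4 := h1.of_dvd ⟨6 * c1, by ring⟩
      rw [this]
  have hJpm : J(((c1 * c0 : ℕ) : ℤ) | d) = 1 ∨ J(((c1 * c0 : ℕ) : ℤ) | d) = -1 :=
    jacobiSym.eq_one_or_neg_one (by rw [Int.gcd_natCast_natCast]; exact hdc.symm)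
  set Jc := J(((c1 * c0 : ℕ) : ℤ) | d) with hJc
  have e1 : ee 24 (((c1 * c0 : ℕ) : ℤ) * d' - 12 - 9 * d' - 6 * Jc * d') =
      ee 24 ((c1 * c0 : ℕ) * ρ' - 12 - 9 * ρ') * ((Jc : ℂ) * ee 4 (-ρ')) := by
    have : ((c1 * c0 : ℕ) : ℤ) * d' - 12 - 9 * d' - 6 * Jc * d' =
      (((c1 * c0 : ℕ) : ℤ) * d' - 12 - 9 * d') + ((6 : ℕ) : ℤ) * (-Jc * d') := by push_cast; ring
    rw [this, ee_add]
    have e6 : ee 24 (((6 : ℕ) : ℤ) * (-Jc * d')) = ee 4 (-Jc * d') :=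
      ee_mul_cancel (a := 6) (by norm_num) 4 _
    rw [e6, ee4_sign Jc hJpm _ hodd']
    obtain ⟨k, hk⟩ := hz2
    push_cast at hk
    congr 1
    · apply ee_congr (by norm_num)
      refine ⟨(((c1 * c0 : ℕ) : ℤ) - 9) * c1 * k, ?_⟩
      push_cast
      linear_combination ((c1 * c0 : ℤ) - 9) * hk
    · congr 1
      apply ee_congr (by norm_num)
      refine ⟨- 6 * c1 * k, ?_⟩
      push_cast
      linear_combination - hk
  have e2 : ee (24 * (c1 * c0)) ((24 * n - 23) * d + (24 * m - 23) * d') =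
      ee (24 * c1) (v * ((24 * n - 23) * ρ + (24 * m - 23) * ρ')) *
      ee c0 (u * ((24 * n - 23) * d + (24 * m - 23) * d')) := by
    rw [← mul_assoc, ee_split (by omega) hc0 huv]
    congr 1
    apply ee_congr (by omega)
    obtain ⟨k, hk⟩ := hz1
    obtain ⟨k', hk'⟩ := hz2
    refine ⟨v * ((24 * n - 23) * k + (24 * m - 23) * k'), ?_⟩
    linear_combination v * (24 * n - 23) * hk + v * (24 * m - 23) * hk'
  rw [e1, e2, hJ1]
  push_cast
  ring

lemma inner_bound (m n : ℤ) (c1 c0 : ℕ) [NeZero c1] [NeZero c0] (hcop : Nat.Coprime c1 c0)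
    (h6 : Nat.Coprime c0 6) (hM : IsCoprime (24 * m - 23) (c0 : ℤ))
    (hN : IsCoprime (24 * n - 23) (c0 : ℤ))
    (e : (ZMod (c1 * c0))ˣ ≃ (ZMod c1)ˣ × (ZMod c0)ˣ)
    (he : ∀ (x : (ZMod (c1 * c0))ˣ) (d : ℕ), (d : ZMod c1) = (e x).1 → (d : ZMod c0) = (e x).2 →
      (d : ZMod (c1 * c0)) = x) (r : (ZMod c1)ˣ) :
    ‖∑ t : (ZMod c0)ˣ, kterm m n (c1 * c0) (e.symm (r, t))‖ ≤ Real.sqrt c0 * c0.divisors.card := by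
  have hc1 : 1 ≤ c1 := Nat.pos_of_ne_zero (NeZero.ne c1)
  have hc0 : 1 ≤ c0 := Nat.pos_of_ne_zero (NeZero.ne c0)
  have hco : Odd c0 := by
    have : Nat.Coprime c0 2 := Nat.Coprime.coprime_dvd_right ⟨3, by norm_num⟩ h6
    rwa [Nat.coprime_comm, Nat.coprime_two_left] at this
  have h24 : Nat.Coprime c0 24 := by
    have : Nat.Coprime c0 (6 ^ 3) := Nat.Coprime.pow_right 3 h6
    exact Nat.Coprime.coprime_dvd_right ⟨9, by norm_num⟩ this
  have hcc : Nat.Coprime (24 * c1) c0 := Nat.Coprime.mul_left h24.symm hcop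
  have hcci : IsCoprime ((24 * c1 : ℕ) : ℤ) (c0 : ℤ) := Nat.isCoprime_iff_coprime.2 hcc
  obtain ⟨u, v, huv⟩ := hcci
  have : NeZero (24 * c1) := ⟨by omega⟩
  have hu : IsCoprime u (c0 : ℤ) := ⟨((24 * c1 : ℕ) : ℤ), v, by linarith⟩
  have hUN : IsCoprime (u * (24 * n - 23)) (c0 : ℤ) := hu.mul_left hN
  have hUM : IsCoprime (u * (24 * m - 23)) (c0 : ℤ) := hu.mul_left hM
  obtain ⟨a, ha⟩ : IsUnit ((u * (24 * n - 23) : ℤ) : ZMod c0) :=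
    (ZMod.coe_int_isUnit_iff_isCoprime _ _).2 hUN.symm
  obtain ⟨b, hb⟩ : IsUnit ((u * (24 * m - 23) : ℤ) : ZMod c0) :=
    (ZMod.coe_int_isUnit_iff_isCoprime _ _).2 hUM.symm
  obtain ⟨ρu, hρu⟩ := ZMod.unitsMap_surjective (n := c1) (m := 24 * c1) ⟨24, by ring⟩ r
  set ρ := (ρu : ZMod (24 * c1)).val with hρ
  set ρ' := ((ρu⁻¹ : (ZMod (24 * c1))ˣ) : ZMod (24 * c1)).val with hρ'
  have hρr : (ρ : ZMod c1) = r := by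
    rw [← hρu, ZMod.unitsMap_val, hρ, ZMod.natCast_val]
  set B : ℂ := (ee (24 * c1) (v * ((24 * n - 23) * ρ + (24 * m - 23) * ρ')) *
      ee 24 ((c1 * c0 : ℕ) * ρ' - 12 - 9 * ρ') * ee 4 (-ρ') * (J(c1 | ρ) : ℤ) * (qsgn c0 ρ : ℤ))
    with hB
  have hBn : ‖B‖ ≤ 1 := by
    rw [hB]
    simp only [norm_mul, norm_ee, one_mul]
    have j1 : ‖((J(c1 | ρ) : ℤ) : ℂ)‖ ≤ 1 := by
      rcases jacobiSym.trichotomy c1 ρ with h | h | h <;> rw [h] <;> simp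
    have j2 : ‖((qsgn c0 ρ : ℤ) : ℂ)‖ ≤ 1 := by
      unfold qsgn; split_ifs <;> simp
    calc _ ≤ (1 : ℝ) * 1 := by gcongr
      _ = 1 := by norm_num
  have key : ∀ t : (ZMod c0)ˣ, kterm m n (c1 * c0) (e.symm (r, t)) =
      B * (((J(((t : ZMod c0).val : ℤ) | c0) : ℤ) : ℂ) *
        ZMod.stdAddChar (N := c0) ((a : ZMod c0) * t + b * ((t⁻¹ : (ZMod c0)ˣ) : ZMod c0))) := by
    intro t
    obtain ⟨d, hd1, hd0⟩ := Nat.chineseRemainder hcc ρ (t : ZMod c0).val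
    obtain ⟨d', hd1', hd0'⟩ := Nat.chineseRemainder hcc ρ' ((t⁻¹ : (ZMod c0)ˣ) : ZMod c0).val
    have z1 : (d : ZMod (24 * c1)) = ρu := by
      rw [(ZMod.natCast_eq_natCast_iff _ _ _).2 hd1, hρ, ZMod.natCast_zmod_val]
    have z1' : (d' : ZMod (24 * c1)) = ((ρu⁻¹ : (ZMod (24 * c1))ˣ) : ZMod (24 * c1)) := by
      rw [(ZMod.natCast_eq_natCast_iff _ _ _).2 hd1', hρ', ZMod.natCast_zmod_val]
    have z0 : (d : ZMod c0) = t := by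
      rw [(ZMod.natCast_eq_natCast_iff _ _ _).2 hd0, ZMod.natCast_zmod_val]
    have z0' : (d' : ZMod c0) = ((t⁻¹ : (ZMod c0)ˣ) : ZMod c0) := by
      rw [(ZMod.natCast_eq_natCast_iff _ _ _).2 hd0', ZMod.natCast_zmod_val]
    have hcd1 : Nat.Coprime d (24 * c1) := by
      rw [← ZMod.isUnit_iff_coprime, z1]; exact ρu.isUnit
    have hcd0 : Nat.Coprime d c0 := by
      rw [← ZMod.isUnit_iff_coprime, z0]; exact t.isUnit
    have hcd : Nat.Coprime d (6 * (c1 * c0)) := by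
      have : Nat.Coprime d (24 * c1 * c0) := hcd1.mul_right hcd0
      exact Nat.Coprime.coprime_dvd_right ⟨4, by ring⟩ this
    have hdd : (24 * (c1 * c0 : ℕ) : ℤ) ∣ (d : ℤ) * d' - 1 := by
      have w1 : ((24 * c1 : ℕ) : ℤ) ∣ (d : ℤ) * d' - 1 := by
        rw [← ZMod.intCast_zmod_eq_zero_iff_dvd]
        push_cast
        rw [z1, z1', Units.mul_inv, sub_self]
      have w0 : (c0 : ℤ) ∣ (d : ℤ) * d' - 1 := by
        rw [← ZMod.intCast_zmod_eq_zero_iff_dvd]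
        push_cast
        rw [z0, z0', Units.mul_inv, sub_self]
      have := (Nat.isCoprime_iff_coprime.2 hcc).mul_dvd w1 w0
      have hz : (24 * (c1 * c0 : ℕ) : ℤ) = ((24 * c1 : ℕ) : ℤ) * (c0 : ℤ) := by
        push_cast; ring
      rw [hz]; exact this
    have hdx : (d : ZMod (c1 * c0)) = (e.symm (r, t)) := by
      apply he
      · rw [Equiv.apply_symm_apply]
        rw [← hρr]
        exact (ZMod.natCast_eq_natCast_iff _ _ _).2 (hd1.of_dvd ⟨24, by ring⟩)
      · rw [Equiv.apply_symm_apply, z0]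
    rw [kterm_split m n c1 c0 hco huv _ d d' ρ ρ' hcd hdx hdd hd1 hd1']
    congr 2
    · congr 1
      apply jacobiSym.mod_left'
      exact_mod_cast hd0
    · rw [ee_eq]
      congr 1
      rw [ha, hb]
      push_cast
      rw [z0, z0']
      ring
  rw [Finset.sum_congr rfl (fun t _ => key t), ← Finset.mul_sum, norm_mul]
  have hs := salie_bound c0 hco a b
  have hk := card_sol c0 hco a b
  have hk' : ((Finset.univ.filter (fun y : ZMod c0 => (b : ZMod c0) * y ^ 2 = a)).card : ℝ) ≤
    c0.divisors.card := by exact_mod_cast hk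
  calc _ ≤ 1 * (Real.sqrt c0 * (Finset.univ.filter (fun y : ZMod c0 => (b : ZMod c0) * y ^ 2 = a)).card) := by
        gcongr
    _ ≤ _ := by rw [one_mul]; gcongr

lemma kloo_bound (m n : ℤ) (c1 c0 : ℕ) (h1 : 1 ≤ c1) (h0 : 1 ≤ c0) (hcop : Nat.Coprime c1 c0)
    (h6 : Nat.Coprime c0 6) (hM : IsCoprime (24 * m - 23) (c0 : ℤ))
    (hN : IsCoprime (24 * n - 23) (c0 : ℤ)) :
    ‖klooS m n (c1 * c0)‖ ≤ c1 * (Real.sqrt c0 * c0.divisors.card) := by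
  have : NeZero c1 := ⟨by omega⟩
  have : NeZero c0 := ⟨by omega⟩
  rw [klooS_norm]
  let e : (ZMod (c1 * c0))ˣ ≃ (ZMod c1)ˣ × (ZMod c0)ˣ :=
    ((Units.mapEquiv (ZMod.chineseRemainder hcop).toMulEquiv).trans MulEquiv.prodUnits).toEquiv
  have he : ∀ (x : (ZMod (c1 * c0))ˣ) (d : ℕ), (d : ZMod c1) = (e x).1 → (d : ZMod c0) = (e x).2 →
      (d : ZMod (c1 * c0)) = x := by
    intro x d hd1 hd2
    apply (ZMod.chineseRemainder hcop).injective
    rw [map_natCast]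
    exact Prod.ext hd1 hd2
  rw [← e.symm.sum_comp, Fintype.sum_prod_type]
  calc _ ≤ ∑ r : (ZMod c1)ˣ, ‖∑ t : (ZMod c0)ˣ, kterm m n (c1 * c0) (e.symm (r, t))‖ :=
        norm_sum_le _ _
    _ ≤ ∑ r : (ZMod c1)ˣ, (Real.sqrt c0 * c0.divisors.card) :=
        Finset.sum_le_sum fun r _ => inner_bound m n c1 c0 hcop h6 hM hN e he r
    _ ≤ _ := by
        rw [Finset.sum_const, nsmul_eq_mul, Finset.card_univ, ZMod.card_units_eq_totient]
        have : ((c1.totient : ℕ) : ℝ) ≤ c1 := by exact_mod_cast Nat.totient_le c1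
        gcongr

lemma factor_exists (Q : ℕ) (hQ : Q ≠ 0) (c : ℕ) (hc : 1 ≤ c) :
    ∃ c1 c0 : ℕ, c1 * c0 = c ∧ c1 ∈ Nat.factoredNumbers Q.primeFactors ∧ Nat.Coprime c0 Q := by
  induction c using Nat.strong_induction_on with
  | _ c ih =>
    by_cases h : Nat.Coprime c Q
    · exact ⟨1, c, one_mul c, Nat.mem_factoredNumbers'.2 (fun p hp h1 => absurd (Nat.dvd_one.1 h1) hp.ne_one), h⟩
    · obtain ⟨p, hp, hpc, hpQ⟩ := Nat.Prime.not_coprime_iff_dvd.1 h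
      obtain ⟨k, rfl⟩ := hpc
      have hk : 1 ≤ k := by
        rcases Nat.eq_zero_or_pos k with h | h
        · subst h; simp at hc
        · exact h
      obtain ⟨c1, c0, h1, h2, h3⟩ := ih k (by nlinarith [hp.two_le]) hk
      refine ⟨p * c1, c0, by rw [mul_assoc, h1], ?_, h3⟩
      rw [Nat.mem_factoredNumbers'] at h2 ⊢
      intro q hq hqd
      rcases (Nat.Prime.dvd_mul hq).1 hqd with h | h
      · rw [(Nat.prime_dvd_prime_iff_eq hq hp).1 h]
        exact Nat.mem_primeFactors.2 ⟨hp, hpQ, hQ⟩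
      · exact h2 q hq h

lemma sum_inv_sqrt (K : ℕ) : ∑ a ∈ Finset.Icc 1 K, (Real.sqrt a)⁻¹ ≤ 2 * Real.sqrt K := by
  induction K with
  | zero => simp
  | succ K ih =>
    rw [Finset.sum_Icc_succ_top (by omega)]
    have h1 : 0 < Real.sqrt ((K + 1 : ℕ) : ℝ) := Real.sqrt_pos.2 (by positivity)
    have h0 : 0 ≤ Real.sqrt (K : ℝ) := Real.sqrt_nonneg _
    have e1 : Real.sqrt ((K + 1 : ℕ) : ℝ) ^ 2 = K + 1 := by
      rw [Real.sq_sqrt (by positivity)]; push_cast; ring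
    have e0 : Real.sqrt (K : ℝ) ^ 2 = K := Real.sq_sqrt (by positivity)
    have : (Real.sqrt ((K + 1 : ℕ) : ℝ))⁻¹ ≤ 2 * Real.sqrt ((K + 1 : ℕ) : ℝ) - 2 * Real.sqrt K := by
      rw [inv_le_iff_one_le_mul₀ h1]
      nlinarith [sq_nonneg (Real.sqrt ((K + 1 : ℕ) : ℝ) - Real.sqrt K)]
    linarith

lemma sum_tau (Y : ℕ) : ∑ k ∈ Finset.Icc 1 Y, (k.divisors.card : ℝ) * (Real.sqrt k)⁻¹ ≤
    2 * Real.sqrt Y * (1 + Real.log Y) := by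
  have h1 : ∑ k ∈ Finset.Icc 1 Y, (k.divisors.card : ℝ) * (Real.sqrt k)⁻¹ ≤
      ∑ b ∈ Finset.Icc 1 Y, ∑ a ∈ Finset.Icc 1 (Y / b), (Real.sqrt b)⁻¹ * (Real.sqrt a)⁻¹ := by
    have : ∀ k ∈ Finset.Icc 1 Y, (k.divisors.card : ℝ) * (Real.sqrt k)⁻¹ =
        ∑ b ∈ k.divisors, (Real.sqrt k)⁻¹ := by
      intro k _; rw [Finset.sum_const, nsmul_eq_mul]
    rw [Finset.sum_congr rfl this, Finset.sum_sigma', Finset.sum_sigma']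
    apply le_of_eq
    refine Finset.sum_bij' (fun x _ => ⟨x.2, x.1 / x.2⟩) (fun y _ => ⟨y.1 * y.2, y.1⟩) ?_ ?_ ?_ ?_ ?_
    · rintro ⟨k, b⟩ h
      simp only [Finset.mem_sigma, Finset.mem_Icc, Nat.mem_divisors] at h ⊢
      obtain ⟨⟨hk1, hkY⟩, hb, hk0⟩ := h
      have hb0 : 0 < b := Nat.pos_of_dvd_of_pos hb (by omega)
      have hbk := Nat.le_of_dvd (by omega) hb
      exact ⟨⟨hb0, by omega⟩, Nat.div_pos hbk hb0, Nat.div_le_div_right hkY⟩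
    · rintro ⟨b, a⟩ h
      simp only [Finset.mem_sigma, Finset.mem_Icc, Nat.mem_divisors] at h ⊢
      obtain ⟨⟨hb1, hbY⟩, ha1, haY⟩ := h
      have := (Nat.le_div_iff_mul_le (by omega)).1 haY
      have hp : 0 < b * a := Nat.mul_pos hb1 ha1
      exact ⟨⟨hp, by rw [mul_comm]; exact this⟩, ⟨a, rfl⟩, hp.ne'⟩
    · rintro ⟨k, b⟩ h
      simp only [Finset.mem_sigma, Finset.mem_Icc, Nat.mem_divisors] at h ⊢
      rw [Nat.mul_div_cancel' h.2.1]
    · rintro ⟨b, a⟩ h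
      simp only [Finset.mem_sigma, Finset.mem_Icc] at h ⊢
      rw [Nat.mul_div_cancel_left _ (by omega)]
    · rintro ⟨k, b⟩ h
      simp only [Finset.mem_sigma, Finset.mem_Icc, Nat.mem_divisors] at h ⊢
      rw [← mul_inv, ← Real.sqrt_mul (by positivity), ← Nat.cast_mul, Nat.mul_div_cancel' h.2.1]
  refine h1.trans ?_
  have h2 : ∀ b ∈ Finset.Icc 1 Y, ∑ a ∈ Finset.Icc 1 (Y / b), (Real.sqrt b)⁻¹ * (Real.sqrt a)⁻¹ ≤
      2 * Real.sqrt Y * (b : ℝ)⁻¹ := by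
    intro b hb
    rw [Finset.mem_Icc] at hb
    have hb0 : (0 : ℝ) < b := by exact_mod_cast hb.1
    rw [← Finset.mul_sum]
    have h3 : Real.sqrt ((Y / b : ℕ) : ℝ) ≤ Real.sqrt Y * (Real.sqrt b)⁻¹ := by
      rw [← div_eq_mul_inv, ← Real.sqrt_div (by positivity)]
      exact Real.sqrt_le_sqrt Nat.cast_div_le
    calc _ ≤ (Real.sqrt b)⁻¹ * (2 * (Real.sqrt Y * (Real.sqrt b)⁻¹)) := by
          gcongr
          exact (sum_inv_sqrt _).trans (by gcongr)
      _ = 2 * Real.sqrt Y * (Real.sqrt b * Real.sqrt b)⁻¹ := by rw [mul_inv]; ring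
      _ = _ := by rw [Real.mul_self_sqrt hb0.le]
  refine (Finset.sum_le_sum h2).trans ?_
  rw [← Finset.mul_sum]
  gcongr
  have := harmonic_le_one_add_log Y
  rw [harmonic_eq_sum_Icc] at this
  push_cast at this
  exact this

/-- `n ↦ n^{-1/2}` as a monoid hom. -/
noncomputable def invSqrtHom : ℕ →* ℝ where
  toFun n := (Real.sqrt n)⁻¹
  map_one' := by simp
  map_mul' a b := by
    push_cast
    rw [Real.sqrt_mul (by positivity), mul_inv]

lemma invSqrt_le {p : ℕ} (hp : 2 ≤ p) : (Real.sqrt p)⁻¹ ≤ 3 / 4 := by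
  have h2 : (2 : ℝ) ≤ p := by exact_mod_cast hp
  have : (4 / 3 : ℝ) ≤ Real.sqrt p := Real.le_sqrt_of_sq_le (by norm_num; linarith)
  rw [inv_le_comm₀ (by linarith) (by norm_num)]
  linarith

lemma smooth_sum (Q : ℕ) (S : Finset ℕ) (hS : ∀ s ∈ S, s ∈ Nat.factoredNumbers Q.primeFactors) :
    ∑ s ∈ S, (Real.sqrt s)⁻¹ ≤ 4 ^ Q.primeFactors.card := by
  have hlt : ∀ {p : ℕ}, p.Prime → ‖invSqrtHom p‖ < 1 := by
    intro p hp
    have h1 := invSqrt_le hp.two_le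
    change ‖(Real.sqrt p)⁻¹‖ < 1
    rw [Real.norm_of_nonneg (by positivity)]
    linarith
  have h := (EulerProduct.summable_and_hasSum_factoredNumbers_prod_filter_prime_geometric
    (f := invSqrtHom) hlt Q.primeFactors).2
  have h' : HasSum ((Nat.factoredNumbers Q.primeFactors).indicator (fun n => invSqrtHom n))
      (∏ p ∈ Q.primeFactors with Nat.Prime p, (1 - invSqrtHom p)⁻¹) :=
    hasSum_subtype_iff_indicator.1 h
  have hle := sum_le_hasSum S (fun i _ => Set.indicator_nonneg (fun n _ => by
    change 0 ≤ (Real.sqrt n)⁻¹; positivity) i) h'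
  have e1 : ∑ s ∈ S, (Nat.factoredNumbers Q.primeFactors).indicator (fun n => invSqrtHom n) s =
      ∑ s ∈ S, (Real.sqrt s)⁻¹ := by
    refine Finset.sum_congr rfl fun s hs => ?_
    rw [Set.indicator_of_mem (hS s hs)]; rfl
  rw [e1] at hle
  refine hle.trans ?_
  have hf : Q.primeFactors.filter Nat.Prime = Q.primeFactors :=
    Finset.filter_true_of_mem fun p hp => Nat.prime_of_mem_primeFactors hp
  rw [hf]
  rw [← Finset.prod_const]
  have hp2 : ∀ p ∈ Q.primeFactors, 1 / 4 ≤ 1 - invSqrtHom p := by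
    intro p hp
    have h1 : invSqrtHom p ≤ 3 / 4 := invSqrt_le (Nat.prime_of_mem_primeFactors hp).two_le
    linarith
  refine Finset.prod_le_prod (fun p hp => ?_) (fun p hp => ?_)
  · exact inv_nonneg.2 (by linarith [hp2 p hp])
  · rw [inv_le_comm₀ (by linarith [hp2 p hp]) (by norm_num)]
    linarith [hp2 p hp]

lemma four_pow_omega (ε : ℝ) (hε : 0 < ε) : ∃ C : ℝ, 0 < C ∧ ∀ Q : ℕ, Q ≠ 0 →
    (4 : ℝ) ^ Q.primeFactors.card ≤ C * (Q : ℝ) ^ ε := by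
  obtain ⟨P, hP⟩ := exists_nat_ge ((4 : ℝ) ^ (1 / ε))
  refine ⟨4 ^ P, by positivity, fun Q hQ => ?_⟩
  have hp1 : ∀ p ∈ Q.primeFactors, (4 : ℝ) ≤ (if p < P then 4 else 1) * (p : ℝ) ^ ε := by
    intro p hp
    have hpp := Nat.prime_of_mem_primeFactors hp
    have h1 : (1 : ℝ) ≤ p := by exact_mod_cast hpp.one_lt.le
    split_ifs with h
    · have := Real.one_le_rpow h1 hε.le
      linarith
    · have h2 : (4 : ℝ) ^ (1 / ε) ≤ p := hP.trans (by exact_mod_cast not_lt.1 h)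
      have := Real.rpow_le_rpow (by positivity) h2 hε.le
      rw [← Real.rpow_mul (by norm_num), one_div_mul_cancel hε.ne', Real.rpow_one] at this
      linarith
  calc (4 : ℝ) ^ Q.primeFactors.card = ∏ p ∈ Q.primeFactors, (4 : ℝ) := by simp
    _ ≤ ∏ p ∈ Q.primeFactors, ((if p < P then (4 : ℝ) else 1) * (p : ℝ) ^ ε) :=
        Finset.prod_le_prod (fun _ _ => by norm_num) hp1
    _ = (∏ p ∈ Q.primeFactors, (if p < P then (4 : ℝ) else 1)) *
        ((∏ p ∈ Q.primeFactors, p : ℕ) : ℝ) ^ ε := by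
        rw [Finset.prod_mul_distrib]
        congr 1
        push_cast
        exact Real.finsetProd_rpow _ _ (fun _ _ => by positivity) _
    _ ≤ 4 ^ P * (Q : ℝ) ^ ε := by
        gcongr
        · rw [Finset.prod_ite, Finset.prod_const, Finset.prod_const_one, mul_one]
          apply pow_le_pow_right₀ (by norm_num)
          calc _ ≤ (Finset.range P).card := Finset.card_le_card (fun p hp => by
                simp only [Finset.mem_filter] at hp
                exact Finset.mem_range.2 hp.2)
            _ = P := Finset.card_range P
        · exact Nat.le_of_dvd (Nat.pos_of_ne_zero hQ) (Nat.prod_primeFactors_dvd Q)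

lemma main_sum (m n : ℤ) (Q : ℕ) (hQ : Q = 6 * ((24 * m - 23).natAbs * (24 * n - 23).natAbs))
    (Y : ℕ) (hY : 1 ≤ Y) :
    ∑ c ∈ Finset.Icc 1 Y, ‖klooS m n c‖ / (c : ℝ) ≤
      2 * Real.sqrt Y * (1 + Real.log Y) * 4 ^ Q.primeFactors.card := by
  have hQ0 : Q ≠ 0 := by
    rw [hQ]
    simp only [ne_eq, mul_eq_zero, Int.natAbs_eq_zero]
    omega
  have hex : ∀ c : ℕ, ∃ x : (_ : ℕ) × ℕ, 1 ≤ c →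
      (x.1 * x.2 = c ∧ x.1 ∈ Nat.factoredNumbers Q.primeFactors ∧ Nat.Coprime x.2 Q) := by
    intro c
    by_cases hc : 1 ≤ c
    · obtain ⟨a, b, h⟩ := factor_exists Q hQ0 c hc
      exact ⟨⟨a, b⟩, fun _ => h⟩
    · exact ⟨⟨0, 0⟩, fun h => absurd h hc⟩
  choose φ hφ using hex
  classical
  set S := (Finset.Icc 1 Y).filter (fun s => s ∈ Nat.factoredNumbers Q.primeFactors) with hS
  set g : (_ : ℕ) × ℕ → ℝ := fun x => (x.2.divisors.card : ℝ) * (Real.sqrt x.2)⁻¹ with hg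
  have hpt : ∀ c ∈ Finset.Icc 1 Y, ‖klooS m n c‖ / (c : ℝ) ≤ g (φ c) := by
    intro c hc
    have hc1 := (Finset.mem_Icc.1 hc).1
    obtain ⟨h1, h2, h3⟩ := hφ c hc1
    change _ ≤ ((φ c).2.divisors.card : ℝ) * (Real.sqrt (φ c).2)⁻¹
    generalize (φ c).1 = c1 at *
    generalize (φ c).2 = c0 at *
    have hc1p : 0 < c1 := Nat.pos_of_ne_zero (by rintro rfl; omega)
    have hc0p : 0 < c0 := Nat.pos_of_ne_zero (by rintro rfl; omega)
    have hcop : Nat.Coprime c1 c0 := by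
      by_contra hn
      obtain ⟨p, hp, hp1, hp0⟩ := Nat.Prime.not_coprime_iff_dvd.1 hn
      have hpQ := Nat.dvd_of_mem_primeFactors (Nat.mem_factoredNumbers'.1 h2 p hp hp1)
      exact Nat.Prime.not_coprime_iff_dvd.2 ⟨p, hp, hp0, hpQ⟩ h3
    have k6 : Nat.Coprime c0 6 := Nat.Coprime.coprime_dvd_right ⟨_, hQ⟩ h3
    have kM : Nat.Coprime c0 (24 * m - 23).natAbs :=
      Nat.Coprime.coprime_dvd_right ⟨6 * (24 * n - 23).natAbs, by rw [hQ]; ring⟩ h3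
    have kN : Nat.Coprime c0 (24 * n - 23).natAbs :=
      Nat.Coprime.coprime_dvd_right ⟨6 * (24 * m - 23).natAbs, by rw [hQ]; ring⟩ h3
    have hb := kloo_bound m n c1 c0 hc1p hc0p hcop k6
      (Int.isCoprime_iff_gcd_eq_one.2 kM.symm) (Int.isCoprime_iff_gcd_eq_one.2 kN.symm)
    rw [h1] at hb
    have r1 : (0 : ℝ) < c1 := by exact_mod_cast hc1p
    have r0 : (0 : ℝ) < c0 := by exact_mod_cast hc0p
    have rs : 0 < Real.sqrt c0 := Real.sqrt_pos.2 r0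
    have rc : (c : ℝ) = c1 * (Real.sqrt c0 * Real.sqrt c0) := by
      rw [Real.mul_self_sqrt r0.le, ← h1]; push_cast; ring
    rw [div_le_iff₀ (by rw [rc]; positivity)]
    refine hb.trans (le_of_eq ?_)
    rw [rc]
    field_simp
  have hinj : Set.InjOn φ (Finset.Icc 1 Y : Finset ℕ) := by
    intro c hc d hd h
    have h1 := (hφ c (Finset.mem_Icc.1 hc).1).1
    have h2 := (hφ d (Finset.mem_Icc.1 hd).1).1
    rw [← h1, ← h2, h]
  have hsub : (Finset.Icc 1 Y).image φ ⊆ S.sigma (fun s => Finset.Icc 1 (Y / s)) := by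
    intro x hx
    obtain ⟨c, hc, rfl⟩ := Finset.mem_image.1 hx
    obtain ⟨hc1, hcY⟩ := Finset.mem_Icc.1 hc
    obtain ⟨h1, h2, h3⟩ := hφ c hc1
    have hc1p : 0 < (φ c).1 := Nat.pos_of_ne_zero (by intro h; rw [h] at h1; omega)
    have hc0p : 0 < (φ c).2 := Nat.pos_of_ne_zero (by intro h; rw [h] at h1; omega)
    rw [Finset.mem_sigma, hS, Finset.mem_filter, Finset.mem_Icc, Finset.mem_Icc]
    refine ⟨⟨⟨hc1p, ?_⟩, h2⟩, hc0p, ?_⟩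
    · nlinarith
    · rw [Nat.le_div_iff_mul_le hc1p, mul_comm]; omega
  have hYr : (1 : ℝ) ≤ Y := by exact_mod_cast hY
  have hlogY : 0 ≤ Real.log Y := Real.log_nonneg hYr
  calc _ ≤ ∑ c ∈ Finset.Icc 1 Y, g (φ c) := Finset.sum_le_sum hpt
    _ = ∑ x ∈ (Finset.Icc 1 Y).image φ, g x := (Finset.sum_image hinj).symm
    _ ≤ ∑ x ∈ S.sigma (fun s => Finset.Icc 1 (Y / s)), g x :=
        Finset.sum_le_sum_of_subset_of_nonneg hsub (fun x _ _ => by rw [hg]; positivity)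
    _ = ∑ s ∈ S, ∑ k ∈ Finset.Icc 1 (Y / s), (k.divisors.card : ℝ) * (Real.sqrt k)⁻¹ := by
        rw [Finset.sum_sigma]
    _ ≤ ∑ s ∈ S, (2 * Real.sqrt Y * (1 + Real.log Y)) * (Real.sqrt s)⁻¹ := by
        refine Finset.sum_le_sum fun s hs => (sum_tau _).trans ?_
        rw [hS, Finset.mem_filter, Finset.mem_Icc] at hs
        have h3 : Real.sqrt ((Y / s : ℕ) : ℝ) ≤ Real.sqrt Y * (Real.sqrt s)⁻¹ := by
          rw [← div_eq_mul_inv, ← Real.sqrt_div (by positivity)]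
          exact Real.sqrt_le_sqrt Nat.cast_div_le
        have h4 : (0 : ℝ) < ((Y / s : ℕ) : ℝ) := by
          exact_mod_cast Nat.div_pos hs.1.2 hs.1.1
        have h5 : ((Y / s : ℕ) : ℝ) ≤ Y := by exact_mod_cast Nat.div_le_self _ _
        have h6 := Real.log_le_log h4 h5
        calc _ ≤ 2 * (Real.sqrt Y * (Real.sqrt s)⁻¹) * (1 + Real.log Y) := by
              have : 0 ≤ Real.log ((Y / s : ℕ) : ℝ) := Real.log_natCast_nonneg _
              gcongr
          _ = _ := by ring
    _ = (2 * Real.sqrt Y * (1 + Real.log Y)) * ∑ s ∈ S, (Real.sqrt s)⁻¹ := by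
        rw [Finset.mul_sum]
    _ ≤ _ := by
        gcongr
        exact smooth_sum Q S (fun s hs => (Finset.mem_filter.1 hs).2)

theorem statement5 :
    ∀ ε : ℝ, 0 < ε → ∃ C : ℝ, 0 < C ∧
      ∀ m n : ℤ, m ≠ 0 → n ≠ 0 → ∀ X : ℝ, 2 ≤ X →
        ∑ c ∈ Finset.Icc 1 ⌊X⌋₊, ‖klooS m n c‖ / (c : ℝ) ≤
          C * X ^ ((1:ℝ)/2) * Real.log X * |(m : ℝ) * n| ^ ε := by
  intro ε hε
  obtain ⟨C, hC, hCQ⟩ := four_pow_omega ε hε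
  refine ⟨2 * 3 * (C * (13254 : ℝ) ^ ε), by positivity, fun m n hm hn X hX => ?_⟩
  set Q : ℕ := 6 * ((24 * m - 23).natAbs * (24 * n - 23).natAbs) with hQ
  have hQ0 : Q ≠ 0 := by
    rw [hQ]
    simp only [ne_eq, mul_eq_zero, Int.natAbs_eq_zero]
    omega
  have hY : 1 ≤ ⌊X⌋₊ := Nat.le_floor (by push_cast; linarith)
  have hYr : (1 : ℝ) ≤ (⌊X⌋₊ : ℝ) := by exact_mod_cast hY
  have hYX : (⌊X⌋₊ : ℝ) ≤ X := Nat.floor_le (by linarith)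
  have hb : ∀ k : ℤ, k ≠ 0 → (((24 * k - 23).natAbs : ℕ) : ℝ) ≤ 47 * |(k : ℝ)| := by
    intro k hk
    have h1 : (24 * k - 23).natAbs ≤ 47 * k.natAbs := by omega
    have h2 : (((24 * k - 23).natAbs : ℕ) : ℝ) ≤ ((47 * k.natAbs : ℕ) : ℝ) := by exact_mod_cast h1
    have h3 : ((k.natAbs : ℕ) : ℝ) = |(k : ℝ)| := by rw [Nat.cast_natAbs, Int.cast_abs]
    rw [Nat.cast_mul, h3] at h2
    exact_mod_cast h2
  have hQle : (Q : ℝ) ≤ 13254 * |(m : ℝ) * n| := by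
    rw [hQ, abs_mul]
    rw [Nat.cast_mul, Nat.cast_mul]
    have := mul_le_mul (hb m hm) (hb n hn) (by positivity) (by positivity)
    have h6 : ((6 : ℕ) : ℝ) = 6 := by norm_num
    rw [h6]
    linarith
  have hQε : (4 : ℝ) ^ Q.primeFactors.card ≤ C * (13254 : ℝ) ^ ε * |(m : ℝ) * n| ^ ε := by
    refine (hCQ Q hQ0).trans ?_
    rw [mul_assoc, ← Real.mul_rpow (by norm_num) (abs_nonneg _)]
    gcongr
  have hlog2 : (0.5 : ℝ) ≤ Real.log X := by
    have h1 := Real.log_two_gt_d9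
    have h2 := Real.log_le_log (by norm_num) hX
    linarith
  have hlogYX : Real.log (⌊X⌋₊ : ℝ) ≤ Real.log X := Real.log_le_log (by linarith) hYX
  have hlogY : 0 ≤ Real.log (⌊X⌋₊ : ℝ) := Real.log_nonneg hYr
  refine (main_sum m n Q hQ ⌊X⌋₊ hY).trans ?_
  rw [← Real.sqrt_eq_rpow]
  calc _ ≤ 2 * Real.sqrt X * (3 * Real.log X) * (C * (13254 : ℝ) ^ ε * |(m : ℝ) * n| ^ ε) := by
        gcongr
        linarith
    _ = _ := by ring
end

section
/- Let c ≥ 1 and d be integers with gcd(d,c) = 1, let d̅ be an integer with d·d̅ ≡ 1 (mod c), and let k be any integer. Then √(12c) · χ₁₂(k) · e(d̅(k²−1)/(24c)) · e^{πi s(d,c)} = Σ_{h ∈ {1,5,7,11}} χ₁₂(h) · e(−d(h²−1)/(24c) − hk/(12c)) · G(−6d, dh+k, c). -/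
open Finset

/-- The Kronecker symbol `(12/j)`. -/
def chi12 (j : ℤ) : ℤ :=
  if j % 12 = 1 ∨ j % 12 = 11 then 1
  else if j % 12 = 5 ∨ j % 12 = 7 then -1
  else 0

/-- The quadratic Gauss sum `G(a,b,c)`. -/
noncomputable def quadGaussSum (a b : ℤ) (c : ℕ) : ℂ :=
  ∑ x ∈ Finset.range c, eFun (((a : ℝ) * (x : ℝ) ^ 2 + (b : ℝ) * (x : ℝ)) / c)


section theta
open Complex Filter Topology

/-- The theta function tends to `1` at the cusp, for a fixed real first argument. -/
lemma tendsto_theta_one (z : ℝ) (f : ℝ → ℂ) (hf : Tendsto (fun t => (f t).im) atTop atTop) :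
    Tendsto (fun t => jacobiTheta₂ (z : ℂ) (f t)) atTop (𝓝 1) := by
  have h1 : (1 : ℂ) = ∑' n : ℤ, (if n = 0 then (1 : ℂ) else 0) := by simp
  rw [h1]
  unfold jacobiTheta₂
  refine tendsto_tsum_of_dominated_convergence
    (bound := fun n : ℤ => ‖jacobiTheta₂_term n (z : ℂ) I‖) ?_ ?_ ?_
  · exact ((summable_jacobiTheta₂_term_iff (z : ℂ) I).mpr (by simp)).norm
  · intro n
    by_cases hn : n = 0
    · subst hn
      simp [jacobiTheta₂_term]
    · simp only [hn, if_false]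
      rw [tendsto_zero_iff_norm_tendsto_zero]
      simp only [norm_jacobiTheta₂_term, ofReal_im, mul_zero, sub_zero]
      apply Real.tendsto_exp_atBot.comp
      apply Tendsto.const_mul_atTop_of_neg _ hf
      have : (0 : ℝ) < (n : ℝ) ^ 2 := by positivity
      nlinarith [Real.pi_pos]
  · filter_upwards [hf.eventually_ge_atTop 1] with t ht n
    simp only [norm_jacobiTheta₂_term, ofReal_im, mul_zero, sub_zero, I_im, mul_one]
    apply Real.exp_le_exp.mpr
    have : (0 : ℝ) ≤ Real.pi * (n : ℝ) ^ 2 := by positivity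
    nlinarith

lemma theta_shift (w : ℂ) (hw : 0 < w.im) (u : ℂ) :
    ∑' m : ℤ, cexp (Real.pi * I * w * ((m : ℂ) + u) ^ 2) =
      1 / (-I * w) ^ (1 / 2 : ℂ) * jacobiTheta₂ u (-1 / w) := by
  have hw0 : w ≠ 0 := by rintro rfl; simp at hw
  have h := jacobiTheta₂_functional_equation (w * u) w
  have h2 : ∑' m : ℤ, cexp (Real.pi * I * w * ((m : ℂ) + u) ^ 2) =
      cexp (Real.pi * I * w * u ^ 2) * jacobiTheta₂ (w * u) w := by
    rw [jacobiTheta₂, ← tsum_mul_left]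
    refine tsum_congr fun m => ?_
    rw [jacobiTheta₂_term, ← Complex.exp_add]
    congr 1; ring
  rw [h2, h, mul_div_cancel_left₀ _ hw0]
  have h3 : cexp (-Real.pi * I * (w * u) ^ 2 / w) = (cexp (Real.pi * I * w * u ^ 2))⁻¹ := by
    rw [← Complex.exp_neg]; congr 1; field_simp
  rw [h3]
  field_simp

lemma theta_residues (N : ℕ) (hN : 0 < N) (g : ℤ → ℂ) (hg : ∀ n m : ℤ, g (N * m + n) = g n)
    (w : ℂ) (hw : 0 < w.im) (y : ℂ)
    (hs : Summable fun n : ℤ => g n * cexp (Real.pi * I * w * ((n : ℂ) - y) ^ 2)) :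
    ∑' n : ℤ, g n * cexp (Real.pi * I * w * ((n : ℂ) - y) ^ 2) =
      1 / (-I * (N ^ 2 * w)) ^ (1 / 2 : ℂ) *
        ∑ r ∈ range N, g r * jacobiTheta₂ (((r : ℂ) - y) / N) (-1 / (N ^ 2 * w)) := by
  have : NeZero N := ⟨hN.ne'⟩
  have hN0 : (N : ℂ) ≠ 0 := by exact_mod_cast hN.ne'
  have hs2 := ((Int.divModEquiv N).symm.summable_iff (f := fun n : ℤ => g n * cexp (Real.pi * I * w * ((n : ℂ) - y) ^ 2))).mpr hs
  have hs3 := (Equiv.prodComm (Fin N) ℤ).summable_iff.mpr hs2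
  rw [← (Int.divModEquiv N).symm.tsum_eq, ← (Equiv.prodComm (Fin N) ℤ).tsum_eq]
  rw [Summable.tsum_prod (by exact hs3), tsum_fintype, mul_sum, ← Fin.sum_univ_eq_sum_range (fun r : ℕ => 1 / (-I * (N ^ 2 * w)) ^ (1 / 2 : ℂ) * (g r * jacobiTheta₂ (((r : ℂ) - y) / N) (-1 / (N ^ 2 * w))))]
  refine Finset.sum_congr rfl fun r _ => ?_
  have hw2 : 0 < ((N : ℂ) ^ 2 * w).im := by
    rw [show ((N : ℂ) ^ 2 * w).im = (N : ℝ) ^ 2 * w.im by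
      rw [show ((N : ℂ) ^ 2) = (((N : ℝ) ^ 2 : ℝ) : ℂ) by push_cast; rfl, im_ofReal_mul]]
    positivity
  have h := theta_shift ((N : ℂ) ^ 2 * w) hw2 (((r : ℕ) - y) / N)
  rw [mul_left_comm, ← h, ← tsum_mul_left]
  refine tsum_congr fun m => ?_
  simp only [Equiv.prodComm_apply, Prod.swap_prod_mk, Int.divModEquiv_symm_apply]
  have e1 : g (m * (N : ℤ) + ((r : ℕ) : ℤ)) = g ((r : ℕ) : ℤ) := by
    rw [mul_comm, hg]
  rw [e1]
  congr 2
  push_cast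
  field_simp
  ring

end theta

section recip
open Complex Filter Topology

lemma eFun_add (x y : ℝ) : eFun (x + y) = eFun x * eFun y := by
  unfold eFun
  rw [← Complex.exp_add]; congr 1; push_cast; ring

lemma eFun_int (n : ℤ) : eFun n = 1 := by
  unfold eFun
  rw [Complex.exp_eq_one_iff]
  exact ⟨n, by push_cast; ring⟩

lemma eFun_congr {x y : ℝ} (n : ℤ) (h : x = y + n) : eFun x = eFun y := by
  rw [h, eFun_add, eFun_int, mul_one]

lemma eFun_zero : eFun 0 = 1 := by simp [eFun]

lemma eFun_ne_zero (x : ℝ) : eFun x ≠ 0 := Complex.exp_ne_zero _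

lemma ofReal_mul_cpow' {r : ℝ} (hr : 0 < r) {x : ℂ} (hx : x ≠ 0) (s : ℂ) :
    ((r : ℂ) * x) ^ s = (r : ℂ) ^ s * x ^ s := by
  have hr0 : (r : ℂ) ≠ 0 := by exact_mod_cast hr.ne'
  rw [cpow_def_of_ne_zero (mul_ne_zero hr0 hx), cpow_def_of_ne_zero hr0, cpow_def_of_ne_zero hx,
    log_ofReal_mul hr hx, ← Complex.exp_add, ofReal_log hr.le]
  congr 1; ring

lemma neg_I_mul_cpow {r : ℝ} (hr : 0 < r) :
    (-I * (r : ℂ)) ^ (1 / 2 : ℂ) = (Real.sqrt r : ℂ) * eFun (-(1 / 8)) := by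
  rw [mul_comm, ofReal_mul_cpow' hr (by simp)]
  congr 1
  · rw [Real.sqrt_eq_rpow, ofReal_cpow hr.le]; norm_num
  · rw [cpow_def_of_ne_zero (by simp), log_neg_I]
    unfold eFun
    congr 1; push_cast; ring

lemma recip_exact (a N : ℕ) (ha : 0 < a) (hN : 0 < N) (hE : Even (a * N)) (b : ℤ)
    (t : ℝ) (ht : 0 < t) :
    ∑ n ∈ range N, eFun ((a * (n : ℝ) ^ 2 + 2 * b * n) / (2 * N)) *
        jacobiTheta₂ (((n : ℝ) / N : ℝ) : ℂ) (I * t) =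
      1 / (-I * ((a : ℂ) / N + I / (N ^ 2 * t))) ^ (1 / 2 : ℂ) *
        (1 / (1 / (1 + I / (a * N * t))) ^ (1 / 2 : ℂ)) *
      ∑ n ∈ range a, eFun (-((N * (n : ℝ) ^ 2 - 2 * b * n + b ^ 2 / N) / (2 * a))) *
        jacobiTheta₂ ((((n : ℝ) - b / N) / a : ℝ) : ℂ) (I * t - 1 / (a * N)) := by
  have ha0 : (a : ℂ) ≠ 0 := by exact_mod_cast ha.ne'
  have hN0 : (N : ℂ) ≠ 0 := by exact_mod_cast hN.ne'
  have ha0' : (a : ℝ) ≠ 0 := by exact_mod_cast ha.ne'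
  have hN0' : (N : ℝ) ≠ 0 := by exact_mod_cast hN.ne'
  have ht0 : (t : ℂ) ≠ 0 := by exact_mod_cast ht.ne'
  obtain ⟨q, hq⟩ := hE
  have hq' : (a : ℝ) * N = 2 * q := by
    have : ((a * N : ℕ) : ℝ) = ((q + q : ℕ) : ℝ) := by rw [hq]
    push_cast at this; linarith
  set τ : ℂ := (a : ℂ) / N + I / (N ^ 2 * t) with hτ
  set w₁ : ℂ := I / (N ^ 2 * t) with hw₁
  have hw₁im : w₁.im = 1 / (N ^ 2 * t) := by
    have : w₁ = ((1 / (N ^ 2 * t) : ℝ) : ℂ) * I := by rw [hw₁]; push_cast; ring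
    rw [this]; simp [-ofReal_div, -ofReal_mul, -ofReal_inv, -one_div]
  have hw₁pos : 0 < w₁.im := by rw [hw₁im]; positivity
  have hτim : τ.im = w₁.im := by
    rw [hτ, add_im, show (a : ℂ) / N = (((a : ℝ) / N : ℝ) : ℂ) by push_cast; rfl, ofReal_im, zero_add]
  have hτpos : 0 < τ.im := by rw [hτim]; exact hw₁pos
  have hτ0 : τ ≠ 0 := by intro h; rw [h] at hτpos; simp at hτpos
  have hden : (a : ℂ) * N * t + I ≠ 0 := by
    intro h
    have := congrArg Complex.im h
    rw [add_im, show (a : ℂ) * N * t = (((a : ℝ) * N * t : ℝ) : ℂ) by push_cast; rfl, ofReal_im] at this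
    simp at this
  set w₂ : ℂ := N * I / (a * (a * N * t + I)) with hw₂
  have hτinv : -1 / τ = -(N / a) + w₂ := by
    have : τ = (a * N * t + I) / (N ^ 2 * t) := by rw [hτ, hw₁]; field_simp
    rw [this, hw₂]
    field_simp
    linear_combination (0 : ℂ) * I_sq
  have hw₂im : w₂.im = (-1 / τ).im := by
    rw [hτinv, add_im, show -((N : ℂ) / a) = ((-((N : ℝ) / a) : ℝ) : ℂ) by push_cast; rfl, ofReal_im, zero_add]
  have hw₂pos : 0 < w₂.im := by
    rw [hw₂im, neg_div, one_div, neg_im, inv_im]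
    have : 0 < normSq τ := normSq_pos.mpr hτ0
    rw [neg_div, neg_neg]; positivity
  -- left side
  have termL : ∀ n : ℤ, eFun ((a * (n : ℝ) ^ 2 + 2 * b * n) / (2 * N)) *
      cexp (Real.pi * I * w₁ * ((n : ℂ) - 0) ^ 2) = jacobiTheta₂_term n ((b : ℂ) / N) τ := by
    intro n
    rw [jacobiTheta₂_term, eFun, ← Complex.exp_add]
    congr 1
    rw [hτ]; push_cast; field_simp; ring
  have L := theta_residues N hN (fun n : ℤ => eFun ((a * (n : ℝ) ^ 2 + 2 * b * n) / (2 * N)))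
    (by
      intro n m
      refine eFun_congr (a * n * m + q * m ^ 2 + b * m) ?_
      push_cast
      field_simp
      linear_combination (m : ℝ) ^ 2 * N * hq') w₁ hw₁pos 0
    (by simp only [termL]; exact (summable_jacobiTheta₂_term_iff _ _).mpr hτpos)
  simp only [termL] at L
  -- right side
  have termR : ∀ n : ℤ, eFun (-((N * (n : ℝ) ^ 2 - 2 * b * n + b ^ 2 / N) / (2 * a))) *
      cexp (Real.pi * I * w₂ * ((n : ℂ) - b / N) ^ 2) =
      cexp (-Real.pi * I * ((b : ℂ) / N) ^ 2 / τ) *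
        jacobiTheta₂_term n ((b : ℂ) / N / τ) (-1 / τ) := by
    intro n
    rw [jacobiTheta₂_term, eFun, ← Complex.exp_add, ← Complex.exp_add]
    congr 1
    have e : w₂ = -1 / τ + N / a := by rw [hτinv]; ring
    rw [e]; push_cast; field_simp; ring
  have R := theta_residues a ha
    (fun n : ℤ => eFun (-((N * (n : ℝ) ^ 2 - 2 * b * n + b ^ 2 / N) / (2 * a))))
    (by
      intro n m
      refine eFun_congr (-(N * n * m + q * m ^ 2 - b * m)) ?_
      push_cast
      field_simp
      linear_combination -(m : ℝ) ^ 2 * N * a * hq') w₂ hw₂pos ((b : ℂ) / N)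
    (by
      simp only [termR]
      exact Summable.mul_left _ ((summable_jacobiTheta₂_term_iff _ _).mpr (hw₂im ▸ hw₂pos)))
  simp only [termR] at R
  rw [tsum_mul_left] at R
  change _ * jacobiTheta₂ _ _ = _ at R
  change jacobiTheta₂ _ _ = _ at L
  have FE := jacobiTheta₂_functional_equation ((b : ℂ) / N) τ
  rw [mul_assoc, R, L] at FE
  have c1 : -I * ((N : ℂ) ^ 2 * w₁) = ((1 / t : ℝ) : ℂ) := by
    rw [hw₁]; push_cast; field_simp; rw [I_sq]; ring
  have hden2 : (1 : ℂ) + I / (a * N * t) ≠ 0 := by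
    intro h
    apply hden
    field_simp at h
    linear_combination h
  have c2 : -I * ((a : ℂ) ^ 2 * w₂) = ((1 / t : ℝ) : ℂ) * (1 / (1 + I / (a * N * t))) := by
    rw [hw₂]; push_cast; field_simp; rw [I_sq]; ring
  have c3 : -1 / ((N : ℂ) ^ 2 * w₁) = I * t := by
    rw [hw₁]; field_simp; rw [I_sq]
  have c4 : -1 / ((a : ℂ) ^ 2 * w₂) = I * t - 1 / (a * N) := by
    rw [hw₂]; field_simp; linear_combination (-(a : ℂ) * N * t) * I_sq
  rw [c1, c2, c3, c4, ofReal_mul_cpow' (by positivity) (by simpa using hden2)] at FE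
  have hpos : ((1 / t : ℝ) : ℂ) ^ (1 / 2 : ℂ) ≠ 0 := by
    rw [Ne, cpow_eq_zero_iff]; push_cast; simp [ht0]
  have FE2 := congrArg (fun x => ((1 / t : ℝ) : ℂ) ^ (1 / 2 : ℂ) * x) FE
  beta_reduce at FE2
  rw [← mul_assoc, mul_one_div_cancel hpos, one_mul] at FE2
  have cast1 : ∀ n : ℕ, (((n : ℝ) / N : ℝ) : ℂ) = (((n : ℕ) : ℂ) - 0) / N := by
    intro n; push_cast; ring
  have cast2 : ∀ n : ℕ, ((((n : ℝ) - b / N) / a : ℝ) : ℂ) = ((n : ℂ) - b / N) / a := by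
    intro n; push_cast; ring
  simp only [Int.cast_natCast] at FE2
  simp only [cast1, cast2]
  rw [FE2]
  have alg : ∀ X Y Z S : ℂ, X ≠ 0 →
      X * (1 / Y * (1 / (X * Z) * S)) = 1 / Y * (1 / Z) * S := by
    intro X Y Z S hX
    simp only [one_div, mul_inv]
    linear_combination (Y⁻¹ * Z⁻¹ * S) * mul_inv_cancel₀ hX
  exact alg _ _ _ _ hpos

lemma gauss_recip (a N : ℕ) (ha : 0 < a) (hN : 0 < N) (hE : Even (a * N)) (b : ℤ) :
    ∑ n ∈ range N, eFun ((a * (n : ℝ) ^ 2 + 2 * b * n) / (2 * N)) =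
      (Real.sqrt (N / a) : ℂ) * eFun (1 / 8) *
      ∑ n ∈ range a, eFun (-((N * (n : ℝ) ^ 2 - 2 * b * n + b ^ 2 / N) / (2 * a))) := by
  have ha0 : (a : ℂ) ≠ 0 := by exact_mod_cast ha.ne'
  have hN0 : (N : ℂ) ≠ 0 := by exact_mod_cast hN.ne'
  have hinv : Tendsto (fun t : ℝ => ((t⁻¹ : ℝ) : ℂ)) atTop (𝓝 0) := by
    have := (continuous_ofReal.tendsto 0).comp tendsto_inv_atTop_zero
    rw [ofReal_zero] at this
    exact this
  have T1 : Tendsto (fun t : ℝ => ∑ n ∈ range N, eFun ((a * (n : ℝ) ^ 2 + 2 * b * n) / (2 * N)) *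
        jacobiTheta₂ (((n : ℝ) / N : ℝ) : ℂ) (I * t)) atTop
      (𝓝 (∑ n ∈ range N, eFun ((a * (n : ℝ) ^ 2 + 2 * b * n) / (2 * N)) * 1)) := by
    refine tendsto_finsetSum _ fun n _ => Tendsto.const_mul _ (tendsto_theta_one _ _ ?_)
    simp only [mul_im, I_re, I_im, ofReal_re, ofReal_im, zero_mul, one_mul, zero_add]
    exact tendsto_id
  have T2 : Tendsto (fun t : ℝ => ∑ n ∈ range a,
        eFun (-((N * (n : ℝ) ^ 2 - 2 * b * n + b ^ 2 / N) / (2 * a))) *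
        jacobiTheta₂ ((((n : ℝ) - b / N) / a : ℝ) : ℂ) (I * t - 1 / (a * N))) atTop
      (𝓝 (∑ n ∈ range a,
        eFun (-((N * (n : ℝ) ^ 2 - 2 * b * n + b ^ 2 / N) / (2 * a))) * 1)) := by
    refine tendsto_finsetSum _ fun n _ => Tendsto.const_mul _ (tendsto_theta_one _ _ ?_)
    have : ∀ t : ℝ, (I * t - 1 / ((a : ℂ) * N)).im = t := by
      intro t
      rw [sub_im, show 1 / ((a : ℂ) * N) = ((1 / ((a : ℝ) * N) : ℝ) : ℂ) by push_cast; rfl, ofReal_im]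
      simp
    simp only [this]
    exact tendsto_id
  have T3 : Tendsto (fun t : ℝ => 1 / (-I * ((a : ℂ) / N + I / (N ^ 2 * t))) ^ (1 / 2 : ℂ)) atTop
      (𝓝 (1 / (-I * (((a : ℝ) / N : ℝ) : ℂ)) ^ (1 / 2 : ℂ))) := by
    have hpos : (0 : ℝ) < (a : ℝ) / N := by positivity
    refine Tendsto.div tendsto_const_nhds ?_ ?_
    · refine Tendsto.cpow ?_ tendsto_const_nhds ?_
      · refine Tendsto.const_mul _ ?_
        have h : Tendsto (fun t : ℝ => (a : ℂ) / N + I / N ^ 2 * ((t⁻¹ : ℝ) : ℂ)) atTop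
            (𝓝 ((a : ℂ) / N + I / N ^ 2 * 0)) := tendsto_const_nhds.add (hinv.const_mul _)
        convert h using 2
        · push_cast; ring
        · push_cast; ring
      · rw [mem_slitPlane_iff]; right
        rw [mul_comm, im_ofReal_mul]; simp; exact ⟨ha.ne', hN.ne'⟩
    · rw [neg_I_mul_cpow hpos]
      refine mul_ne_zero ?_ (eFun_ne_zero _)
      exact_mod_cast (Real.sqrt_pos.mpr hpos).ne'
  have T4 : Tendsto (fun t : ℝ => 1 / (1 / (1 + I / ((a : ℂ) * N * t))) ^ (1 / 2 : ℂ)) atTop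
      (𝓝 (1 / (1 / (1 + 0)) ^ (1 / 2 : ℂ))) := by
    refine Tendsto.div tendsto_const_nhds ?_ (by simp)
    refine Tendsto.cpow ?_ tendsto_const_nhds (by simp)
    refine Tendsto.div tendsto_const_nhds ?_ (by simp)
    refine tendsto_const_nhds.add ?_
    have h := hinv.const_mul (I / ((a : ℂ) * N))
    rw [mul_zero] at h
    convert h using 2
    push_cast; ring
  have T5 := (T3.mul T4).mul T2
  have T6 := tendsto_nhds_unique (T1.congr' ?_) T5
  · simp only [mul_one] at T6
    rw [T6]
    congr 1
    have hpos : (0 : ℝ) < (a : ℝ) / N := by positivity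
    rw [neg_I_mul_cpow hpos]
    simp only [add_zero, div_one, one_cpow, mul_one]
    have h1 : eFun (1 / 8) * eFun (-(1 / 8)) = 1 := by
      rw [← eFun_add]; norm_num [eFun_zero]
    have h2 : (Real.sqrt (N / a) : ℂ) * (Real.sqrt (a / N) : ℂ) = 1 := by
      rw [← ofReal_mul, ← Real.sqrt_mul (by positivity)]
      rw [show (N : ℝ) / a * (a / N) = 1 by field_simp]
      simp
    have h3 : (Real.sqrt (a / N) : ℂ) ≠ 0 := right_ne_zero_of_mul_eq_one h2
    have h4 := eFun_ne_zero (-(1 / 8))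
    rw [div_eq_iff (mul_ne_zero h3 h4)]
    linear_combination -(eFun (1 / 8) * eFun (-(1 / 8))) * h2 - h1
  · filter_upwards [eventually_gt_atTop 0] with t ht
    exact recip_exact a N ha hN hE b t ht

end recip

section dedekind

lemma dedekindS_eq (d : ℤ) (c : ℕ) :
    dedekindS d c = ∑ r ∈ range c, ((r : ℝ) / c) * ((d : ℝ) * r / c - ⌊(d : ℝ) * r / c⌋ - 1 / 2) := by
  unfold dedekindS
  refine Finset.sum_subset ?_ ?_
  · intro r hr
    simp only [Finset.mem_Icc, Finset.mem_range] at *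
    omega
  · intro r hr hr'
    simp only [Finset.mem_Icc, Finset.mem_range] at *
    have : r = 0 := by omega
    subst this; simp

lemma dedekindS_add_mul (d : ℤ) (c : ℕ) (hc : 0 < c) (m : ℤ) :
    dedekindS (d + c * m) c = dedekindS d c := by
  have hc0 : (c : ℝ) ≠ 0 := by exact_mod_cast hc.ne'
  rw [dedekindS_eq, dedekindS_eq]
  refine Finset.sum_congr rfl fun r _ => ?_
  have : (((d + c * m : ℤ)) : ℝ) * r / c = (d : ℝ) * r / c + ((m * r : ℤ) : ℝ) := by
    push_cast; field_simp
  rw [this, Int.floor_add_intCast]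
  push_cast; ring

lemma floor_nat_div (a c : ℕ) (hc : 0 < c) : ⌊(a : ℝ) / c⌋ = ((a / c : ℕ) : ℤ) := by
  have hc0 : (0 : ℝ) < c := by exact_mod_cast hc
  rw [Int.floor_eq_iff, le_div_iff₀ hc0, div_lt_iff₀ hc0]
  have h1 := Nat.div_mul_le_self a c
  refine ⟨by exact_mod_cast h1, ?_⟩
  have h3 : a < (a / c + 1) * c := by
    have := Nat.div_add_mod a c
    have := Nat.mod_lt a hc
    nlinarith
  exact_mod_cast h3

lemma dedekindS_neg (d c : ℕ) (hc : 0 < c) (h : Nat.Coprime d c) :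
    dedekindS (-(d : ℤ)) c = - dedekindS d c := by
  have hc0 : (0 : ℝ) < c := by exact_mod_cast hc
  rw [dedekindS_eq, dedekindS_eq, ← Finset.sum_neg_distrib]
  refine Finset.sum_congr rfl fun r hr => ?_
  by_cases hr0 : r = 0
  · subst hr0; simp
  have e1 : ((d : ℤ) : ℝ) * r / c = ((d * r : ℕ) : ℝ) / c := by push_cast; rfl
  have e2 : ((-(d : ℤ) : ℤ) : ℝ) * r / c = -(((d * r : ℕ) : ℝ) / c) := by push_cast; ring
  rw [e1, e2, floor_nat_div _ _ hc]
  have hf : ⌊-(((d * r : ℕ) : ℝ) / c)⌋ = -((d * r / c : ℕ) : ℤ) - 1 := by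
    have hnd : ¬ c ∣ d * r := by
      intro hd
      have := Nat.Coprime.dvd_of_dvd_mul_left h.symm hd
      have := Nat.le_of_dvd (Nat.pos_of_ne_zero hr0) this
      simp only [Finset.mem_range] at hr
      omega
    have hmod : 0 < d * r % c := Nat.pos_of_ne_zero fun h0 => hnd (Nat.dvd_of_mod_eq_zero h0)
    have h2 := Nat.mod_lt (d * r) hc
    have h3 := Nat.div_add_mod (d * r) c
    generalize d * r = A at *
    have h3' : (c : ℝ) * ((A / c : ℕ) : ℝ) + ((A % c : ℕ) : ℝ) = (A : ℝ) := by exact_mod_cast h3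
    have hmod' : (0 : ℝ) < ((A % c : ℕ) : ℝ) := by exact_mod_cast hmod
    have h2' : ((A % c : ℕ) : ℝ) < c := by exact_mod_cast h2
    rw [Int.floor_eq_iff, ← neg_div, le_div_iff₀ hc0, div_lt_iff₀ hc0]
    simp only [Int.cast_sub, Int.cast_neg, Int.cast_natCast, Int.cast_one]
    constructor <;> nlinarith
  rw [hf]
  push_cast
  ring

lemma sum_mul_mod (d c : ℕ) (hc : 0 < c) (h : Nat.Coprime d c) (φ : ℕ → ℝ) :
    ∑ r ∈ range c, φ (d * r % c) = ∑ r ∈ range c, φ r := by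
  have hmaps : Set.MapsTo (fun r => d * r % c) (range c : Set ℕ) (range c : Set ℕ) := by
    intro r _
    simp only [Finset.coe_range, Set.mem_Iio]
    exact Nat.mod_lt _ hc
  have hinj : Set.InjOn (fun r => d * r % c) (range c : Set ℕ) := by
    intro r hr s hs hrs
    simp only [Finset.coe_range, Set.mem_Iio] at hr hs
    have h1 : d * r ≡ d * s [MOD c] := hrs
    have h2 := Nat.ModEq.cancel_left_of_coprime h.symm h1
    exact Nat.ModEq.eq_of_lt_of_lt h2 hr hs
  exact Finset.sum_nbij (fun r => d * r % c) hmaps hinj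
    (Finset.surjOn_of_injOn_of_card_le _ hmaps hinj le_rfl) (fun _ _ => rfl)

lemma sum_count (d c r : ℕ) (hc : 0 < c) (hd : 0 < d) (hr : r < c) (ψ : ℕ → ℝ) :
    ∑ q ∈ range d, (if c * q ≤ d * r then ψ q else 0) = ∑ q ∈ range (d * r / c + 1), ψ q := by
  rw [← Finset.sum_filter]
  refine Finset.sum_congr ?_ fun _ _ => rfl
  ext q
  simp only [Finset.mem_filter, Finset.mem_range, Nat.lt_succ_iff]
  rw [Nat.le_div_iff_mul_le hc, mul_comm q c]
  refine ⟨fun h => h.2, fun h => ⟨?_, h⟩⟩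
  by_contra hq
  push Not at hq
  have : c * d ≤ c * q := Nat.mul_le_mul_left _ hq
  have : d * r < d * c := Nat.mul_lt_mul_of_pos_left hr hd
  nlinarith

lemma sum_range_id' (n : ℕ) : ∑ q ∈ range n, (q : ℝ) = n * (n - 1) / 2 := by
  induction n with
  | zero => simp
  | succ n ih => rw [Finset.sum_range_succ, ih]; push_cast; ring

lemma sum_range_sq' (n : ℕ) : ∑ q ∈ range n, (q : ℝ) ^ 2 = n * (n - 1) * (2 * n - 1) / 6 := by
  induction n with
  | zero => simp
  | succ n ih => rw [Finset.sum_range_succ, ih]; push_cast; ring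

/-- Lattice point count. -/
lemma lattice (d c : ℕ) (hc : 0 < c) (hd : 0 < d) (h : Nat.Coprime d c) :
    ∑ r ∈ range c, (((d * r / c : ℕ) : ℝ) ^ 2 - 1) +
      ∑ q ∈ range d, (2 * (q : ℝ) - 1) * (((c * q / d : ℕ) : ℝ) + 1) =
      c * (d * (d - 1) - d) - 1 := by
  have h1 : ∀ r ∈ range c, (((d * r / c : ℕ) : ℝ) ^ 2 - 1) =
      ∑ q ∈ range d, (if c * q ≤ d * r then (2 * (q : ℝ) - 1) else 0) := by
    intro r hr
    rw [sum_count d c r hc hd (Finset.mem_range.mp hr) (fun q => 2 * (q : ℝ) - 1),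
      Finset.sum_sub_distrib, ← Finset.mul_sum, sum_range_id']
    simp
    ring
  have h2 : ∀ q ∈ range d, (2 * (q : ℝ) - 1) * (((c * q / d : ℕ) : ℝ) + 1) =
      ∑ r ∈ range c, (if d * r ≤ c * q then (2 * (q : ℝ) - 1) else 0) := by
    intro q hq
    rw [sum_count c d q hd hc (Finset.mem_range.mp hq) (fun _ => 2 * (q : ℝ) - 1)]
    simp
    ring
  rw [Finset.sum_congr rfl h1, Finset.sum_congr rfl h2, Finset.sum_comm (s := range d),
    ← Finset.sum_add_distrib]
  have h3 : ∀ r ∈ range c, (∑ q ∈ range d, (if c * q ≤ d * r then (2 * (q : ℝ) - 1) else 0) +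
      ∑ q ∈ range d, (if d * r ≤ c * q then (2 * (q : ℝ) - 1) else 0)) =
      (d * (d - 1) - d) + (if r = 0 then -1 else 0) := by
    intro r hr
    rw [← Finset.sum_add_distrib]
    have h4 : ∀ q ∈ range d, ((if c * q ≤ d * r then (2 * (q : ℝ) - 1) else 0) +
        (if d * r ≤ c * q then (2 * (q : ℝ) - 1) else 0)) =
        (2 * (q : ℝ) - 1) + (if q = 0 then (if r = 0 then (-1 : ℝ) else 0) else 0) := by
      intro q hq
      rcases lt_trichotomy (c * q) (d * r) with hlt | heq | hgt
      · rw [if_pos hlt.le, if_neg (not_le.mpr hlt)]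
        have : ¬ (q = 0 ∧ r = 0) := by rintro ⟨rfl, rfl⟩; simp at hlt
        by_cases hq0 : q = 0 <;> by_cases hr0 : r = 0 <;> simp_all
      · have hq0 : q = 0 := by
          have hdv : d ∣ c * q := ⟨r, heq⟩
          have := Nat.Coprime.dvd_of_dvd_mul_left h hdv
          exact Nat.eq_zero_of_dvd_of_lt this (Finset.mem_range.mp hq)
        have hr0 : r = 0 := by
          subst hq0
          simp at heq
          omega
        subst hq0 hr0
        simp
      · rw [if_neg (not_le.mpr hgt), if_pos hgt.le]
        have : ¬ (q = 0 ∧ r = 0) := by rintro ⟨rfl, rfl⟩; simp at hgt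
        by_cases hq0 : q = 0 <;> by_cases hr0 : r = 0 <;> simp_all
    rw [Finset.sum_congr rfl h4, Finset.sum_add_distrib, Finset.sum_sub_distrib, ← Finset.mul_sum,
      sum_range_id', Finset.sum_ite_eq' (range d) 0 (fun _ => (if r = 0 then (-1 : ℝ) else 0)),
      if_pos (Finset.mem_range.mpr hd)]
    simp
    ring
  rw [Finset.sum_congr rfl h3, Finset.sum_add_distrib,
    Finset.sum_ite_eq' (range c) 0 (fun _ => (-1 : ℝ)), if_pos (Finset.mem_range.mpr hc)]
  simp
  ring

lemma dedekindS_nat (d c : ℕ) (hc : 0 < c) :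
    dedekindS d c = d * (c * (c - 1) * (2 * c - 1) / 6) / c ^ 2 -
      (∑ r ∈ range c, (r : ℝ) * ((d * r / c : ℕ) : ℝ)) / c - (c * (c - 1) / 2) / (2 * c) := by
  rw [dedekindS_eq, ← sum_range_sq', ← sum_range_id', Finset.mul_sum, Finset.sum_div,
    Finset.sum_div, Finset.sum_div, ← Finset.sum_sub_distrib, ← Finset.sum_sub_distrib]
  refine Finset.sum_congr rfl fun r _ => ?_
  have e1 : ((d : ℤ) : ℝ) * r / c = ((d * r : ℕ) : ℝ) / c := by push_cast; rfl
  rw [e1, floor_nat_div _ _ hc]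
  simp only [Int.cast_natCast, Nat.cast_mul]
  ring

lemma dedekind_recip (d c : ℕ) (hc : 0 < c) (hd : 0 < d) (h : Nat.Coprime d c) :
    dedekindS d c + dedekindS c d =
      -1 / 4 + ((d : ℝ) / c + c / d + 1 / (c * d)) / 12 := by
  have hc0 : (c : ℝ) ≠ 0 := by exact_mod_cast hc.ne'
  have hd0 : (d : ℝ) ≠ 0 := by exact_mod_cast hd.ne'
  have hmod : ∀ a n : ℕ, ((a % n : ℕ) : ℝ) = (a : ℝ) - n * ((a / n : ℕ) : ℝ) := by
    intro a n
    have := Nat.div_add_mod a n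
    have h2 : ((n * (a / n) + a % n : ℕ) : ℝ) = (a : ℝ) := by rw [this]
    rw [Nat.cast_add, Nat.cast_mul] at h2
    linarith
  have P := sum_mul_mod d c hc h (fun x => (x : ℝ) ^ 2)
  have Q := sum_mul_mod c d hd h.symm (fun x => (x : ℝ))
  have L := lattice d c hc hd h
  simp only [hmod, Nat.cast_mul] at P Q
  rw [sum_range_sq'] at P
  rw [sum_range_id', Finset.sum_sub_distrib, ← Finset.mul_sum, ← Finset.mul_sum, sum_range_id'] at Q
  have P2 : ∑ r ∈ range c, ((d : ℝ) * r - c * ((d * r / c : ℕ) : ℝ)) ^ 2 =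
      d ^ 2 * ∑ r ∈ range c, (r : ℝ) ^ 2 - 2 * d * c * ∑ r ∈ range c, (r : ℝ) * ((d * r / c : ℕ) : ℝ) +
      c ^ 2 * ∑ r ∈ range c, ((d * r / c : ℕ) : ℝ) ^ 2 := by
    rw [Finset.mul_sum, Finset.mul_sum, Finset.mul_sum, ← Finset.sum_sub_distrib,
      ← Finset.sum_add_distrib]
    refine Finset.sum_congr rfl fun r _ => ?_
    ring
  rw [P2, sum_range_sq'] at P
  have L2 : ∑ q ∈ range d, (2 * (q : ℝ) - 1) * (((c * q / d : ℕ) : ℝ) + 1) =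
      2 * ∑ q ∈ range d, (q : ℝ) * ((c * q / d : ℕ) : ℝ) + 2 * ∑ q ∈ range d, (q : ℝ) -
      ∑ q ∈ range d, ((c * q / d : ℕ) : ℝ) - d := by
    have : (d : ℝ) = ∑ q ∈ range d, (1 : ℝ) := by simp
    conv_rhs => rw [this]
    rw [Finset.mul_sum, Finset.mul_sum, ← Finset.sum_add_distrib, ← Finset.sum_sub_distrib,
      ← Finset.sum_sub_distrib]
    refine Finset.sum_congr rfl fun r _ => ?_
    ring
  rw [L2, Finset.sum_sub_distrib, sum_range_id'] at L
  simp only [Finset.sum_const, Finset.card_range, nsmul_eq_mul, mul_one] at L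
  rw [dedekindS_nat d c hc, dedekindS_nat c d hd]
  generalize ∑ r ∈ range c, (r : ℝ) * ((d * r / c : ℕ) : ℝ) = A at *
  generalize ∑ r ∈ range c, ((d * r / c : ℕ) : ℝ) ^ 2 = B at *
  generalize ∑ q ∈ range d, (q : ℝ) * ((c * q / d : ℕ) : ℝ) = A' at *
  generalize ∑ q ∈ range d, ((c * q / d : ℕ) : ℝ) = G at *
  have hG : G = (c - 1) * (d - 1) / 2 := by
    field_simp at Q ⊢
    linear_combination -Q
  subst hG
  have hB : B = c * (d * (d - 1) - d) - 1 + c -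
    (2 * A' + 2 * (d * (d - 1) / 2) - (c - 1) * (d - 1) / 2 - d) := by linear_combination L
  subst hB
  have hA : A = ((d ^ 2 - 1) * (c * (c - 1) * (2 * c - 1) / 6) + c ^ 2 * (c * (d * (d - 1) - d) - 1 + c -
    (2 * A' + 2 * (d * (d - 1) / 2) - (c - 1) * (d - 1) / 2 - d))) / (2 * d * c) := by
    rw [eq_div_iff (mul_ne_zero (mul_ne_zero two_ne_zero hd0) hc0)]
    linear_combination (-1) * P
  subst hA
  field_simp
  ring

end dedekind

section main
open Complex

/-- The twisted sum. -/
noncomputable def Tsum (d : ℤ) (c : ℕ) (k : ℤ) : ℂ :=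
  ∑ j ∈ range (12 * c), (chi12 j : ℂ) * eFun (-(d * (j : ℝ) ^ 2 + 2 * j * k) / (24 * c))

lemma chi12_add (x : ℤ) (j : ℤ) : chi12 (12 * x + j) = chi12 j := by
  unfold chi12
  rw [show (12 * x + j) % 12 = j % 12 by omega]

lemma sum_reindex (c : ℕ) (F : ℤ → ℂ) :
    ∑ j ∈ range (12 * c), (chi12 j : ℂ) * F j =
      ∑ h ∈ ({1, 5, 7, 11} : Finset ℤ), (chi12 h : ℂ) * ∑ x ∈ range c, F (h + 12 * x) := by
  induction c with
  | zero => simp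
  | succ c ih =>
    rw [show 12 * (c + 1) = 12 * c + 12 by ring, Finset.sum_range_add, ih]
    simp only [Finset.sum_range_succ _ c, mul_add, Finset.sum_add_distrib]
    congr 1
    have h1 : ∀ i : ℕ, chi12 ((12 * c + i : ℕ) : ℤ) = chi12 i := by
      intro i; push_cast; exact chi12_add c i
    simp only [h1]
    simp [Finset.sum_range_succ, chi12, add_comm]
    ring

lemma chi_cases (k : ℤ) : chi12 k = 0 ∨ ∃ u : ℤ, k ^ 2 = 1 + 24 * u := by
  by_cases h : k % 12 = 1 ∨ k % 12 = 11 ∨ k % 12 = 5 ∨ k % 12 = 7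
  · right
    have hk := Int.mul_ediv_add_emod k 12
    generalize k / 12 = q at hk
    rcases h with h | h | h | h <;> rw [h] at hk <;> subst hk
    · exact ⟨6 * q ^ 2 + q, by ring⟩
    · exact ⟨6 * q ^ 2 + 11 * q + 5, by ring⟩
    · exact ⟨6 * q ^ 2 + 5 * q + 1, by ring⟩
    · exact ⟨6 * q ^ 2 + 7 * q + 2, by ring⟩
  · left
    unfold chi12
    rw [if_neg (by tauto), if_neg (by tauto)]

lemma sqrt12_eq : (Real.sqrt 12 : ℂ) = 2 * (Real.sqrt 3 : ℂ) := by
  rw [show (12 : ℝ) = 2 ^ 2 * 3 by norm_num, Real.sqrt_mul (by norm_num), Real.sqrt_sq (by norm_num)]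
  push_cast; rfl

lemma eFun_natMul (n : ℕ) (x : ℝ) : eFun (n * x) = eFun x ^ n := by
  unfold eFun
  rw [← Complex.exp_nat_mul]; congr 1; push_cast; ring

/-- Finite Fourier expansion of the character. -/
lemma chi_fourier (k : ℤ) :
    ∑ h ∈ ({1, 5, 7, 11} : Finset ℤ), (chi12 h : ℂ) * eFun (-((h : ℝ) * k / 12)) =
      (Real.sqrt 12 : ℂ) * (chi12 k : ℂ) := by
  set ω : ℂ := eFun (1 / 12) with hω
  have hωval : ω = ((Real.sqrt 3 : ℂ) + I) / 2 := by
    rw [hω, eFun, show 2 * (Real.pi : ℂ) * I * ((1 / 12 : ℝ) : ℂ) = ((Real.pi / 6 : ℝ) : ℂ) * I by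
      push_cast; ring, exp_mul_I, ← ofReal_cos, ← ofReal_sin, Real.cos_pi_div_six,
      Real.sin_pi_div_six]
    push_cast; ring
  have h3 : (Real.sqrt 3 : ℂ) ^ 2 = 3 := by
    rw [← ofReal_pow, Real.sq_sqrt (by norm_num)]; norm_num
  have w2 : ω ^ 2 = (1 + (Real.sqrt 3 : ℂ) * I) / 2 := by
    rw [hωval]; linear_combination h3 / 4 + I_sq / 4
  have w4 : ω ^ 4 = ω ^ 2 - 1 := by
    rw [show ω ^ 4 = (ω ^ 2) ^ 2 by ring, w2]
    linear_combination (Real.sqrt 3 : ℂ) ^ 2 / 4 * I_sq - h3 / 4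
  have w5 : ω ^ 5 = ω ^ 3 - ω := by linear_combination ω * w4
  have w6 : ω ^ 6 = -1 := by linear_combination (ω ^ 2 + 1) * w4
  have w7 : ω ^ 7 = -ω := by linear_combination ω * w6
  have w8 : ω ^ 8 = -ω ^ 2 := by linear_combination ω ^ 2 * w6
  have w9 : ω ^ 9 = -ω ^ 3 := by linear_combination ω ^ 3 * w6
  have w10 : ω ^ 10 = 1 - ω ^ 2 := by linear_combination ω ^ 4 * w6 - w4
  have w11 : ω ^ 11 = ω - ω ^ 3 := by linear_combination ω ^ 5 * w6 - w5
  have w3 : (Real.sqrt 3 : ℂ) = 2 * ω - ω ^ 3 := by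
    rw [show ω ^ 3 = ω * ω ^ 2 by ring, w2, hωval]
    linear_combination (I / 4) * h3 + ((Real.sqrt 3 : ℂ) / 4) * I_sq
  -- reduction to powers
  have hk := Int.mul_ediv_add_emod k 12
  have hnn : 0 ≤ k % 12 := Int.emod_nonneg _ (by norm_num)
  have hlt : k % 12 < 12 := Int.emod_lt_of_pos _ (by norm_num)
  have hpow : ∀ (h : ℤ) (n : ℕ), (12 : ℤ) ∣ (n : ℤ) + h * (k % 12) →
      eFun (-((h : ℝ) * k / 12)) = ω ^ n := by
    rintro h n ⟨v, hv⟩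
    rw [hω, ← eFun_natMul]
    refine eFun_congr (-(h * (k / 12)) - v) ?_
    have hk' : (k : ℝ) = 12 * ((k / 12 : ℤ) : ℝ) + ((k % 12 : ℤ) : ℝ) := by exact_mod_cast hk.symm
    have hv' : (n : ℝ) + h * ((k % 12 : ℤ) : ℝ) = 12 * v := by exact_mod_cast hv
    simp only [Int.cast_sub, Int.cast_neg, Int.cast_mul]
    rw [hk']
    linear_combination (-1 / 12) * hv'
  have hsum : ∑ h ∈ ({1, 5, 7, 11} : Finset ℤ), (chi12 h : ℂ) * eFun (-((h : ℝ) * k / 12)) =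
      eFun (-(((1 : ℤ) : ℝ) * k / 12)) - eFun (-(((5 : ℤ) : ℝ) * k / 12))
      - eFun (-(((7 : ℤ) : ℝ) * k / 12)) + eFun (-(((11 : ℤ) : ℝ) * k / 12)) := by
    simp [chi12]
    ring
  rw [hsum, sqrt12_eq]
  unfold chi12
  generalize hm : k % 12 = m at *
  interval_cases m
  · rw [hpow 1 0 (by norm_num), hpow 5 0 (by norm_num), hpow 7 0 (by norm_num), hpow 11 0 (by norm_num)]
    norm_num
  · rw [hpow 1 11 (by norm_num), hpow 5 7 (by norm_num), hpow 7 5 (by norm_num), hpow 11 1 (by norm_num), w11, w7, w5]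
    norm_num [w3]; ring
  · rw [hpow 1 10 (by norm_num), hpow 5 2 (by norm_num), hpow 7 10 (by norm_num), hpow 11 2 (by norm_num)]
    norm_num
  · rw [hpow 1 9 (by norm_num), hpow 5 9 (by norm_num), hpow 7 3 (by norm_num), hpow 11 3 (by norm_num)]
    norm_num
  · rw [hpow 1 8 (by norm_num), hpow 5 4 (by norm_num), hpow 7 8 (by norm_num), hpow 11 4 (by norm_num)]
    norm_num
  · rw [hpow 1 7 (by norm_num), hpow 5 11 (by norm_num), hpow 7 1 (by norm_num), hpow 11 5 (by norm_num), w11, w7, w5]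
    norm_num [w3]; ring
  · rw [hpow 1 6 (by norm_num), hpow 5 6 (by norm_num), hpow 7 6 (by norm_num), hpow 11 6 (by norm_num)]
    norm_num
  · rw [hpow 1 5 (by norm_num), hpow 5 1 (by norm_num), hpow 7 11 (by norm_num), hpow 11 7 (by norm_num), w11, w7, w5]
    norm_num [w3]; ring
  · rw [hpow 1 4 (by norm_num), hpow 5 8 (by norm_num), hpow 7 4 (by norm_num), hpow 11 8 (by norm_num)]
    norm_num
  · rw [hpow 1 3 (by norm_num), hpow 5 3 (by norm_num), hpow 7 9 (by norm_num), hpow 11 9 (by norm_num)]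
    norm_num
  · rw [hpow 1 2 (by norm_num), hpow 5 10 (by norm_num), hpow 7 2 (by norm_num), hpow 11 10 (by norm_num)]
    norm_num
  · rw [hpow 1 1 (by norm_num), hpow 5 5 (by norm_num), hpow 7 7 (by norm_num), hpow 11 11 (by norm_num), w11, w7, w5]
    norm_num [w3]; ring

lemma Tsum_reindex (d : ℤ) (c : ℕ) (k : ℤ) :
    Tsum d c k = ∑ h ∈ ({1, 5, 7, 11} : Finset ℤ), (chi12 h : ℂ) *
      ∑ x ∈ range c, eFun (-(d * ((h : ℝ) + 12 * x) ^ 2 + 2 * ((h : ℝ) + 12 * x) * k) / (24 * c)) := by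
  have h := sum_reindex c (fun j : ℤ => eFun (-(d * (j : ℝ) ^ 2 + 2 * j * k) / (24 * c)))
  simp only [Int.cast_natCast, Int.cast_add, Int.cast_mul, Int.cast_ofNat] at h
  exact h

lemma Tsum_recip (c d : ℕ) (hc : 0 < c) (hd : 0 < d) (k : ℤ) :
    (Real.sqrt 12 : ℂ) * Tsum (-(c : ℤ)) d k =
      (Real.sqrt (12 * d / c) : ℂ) * eFun (1 / 8) * eFun (-((k : ℝ) ^ 2 / (24 * c * d))) *
        Tsum d c k := by
  have hc0 : (c : ℝ) ≠ 0 := by exact_mod_cast hc.ne'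
  have hd0 : (d : ℝ) ≠ 0 := by exact_mod_cast hd.ne'
  have h1 : (Real.sqrt 12 : ℂ) * Tsum (-(c : ℤ)) d k =
      ∑ h ∈ ({1, 5, 7, 11} : Finset ℤ), (chi12 h : ℂ) *
        ∑ j ∈ range (12 * d),
          eFun ((c * (j : ℝ) ^ 2 + 2 * ((-(d * h) - k : ℤ) : ℝ) * j) / (2 * (12 * d : ℕ))) := by
    unfold Tsum
    simp only [Finset.mul_sum]
    rw [Finset.sum_comm]
    refine Finset.sum_congr rfl fun j _ => ?_
    rw [← mul_assoc, ← chi_fourier, Finset.sum_mul]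
    refine Finset.sum_congr rfl fun h _ => ?_
    rw [mul_assoc, ← eFun_add]
    congr 2
    push_cast
    field_simp
    ring
  rw [h1, Tsum_reindex, Finset.mul_sum]
  refine Finset.sum_congr rfl fun h _ => ?_
  rw [gauss_recip c (12 * d) hc (by omega) ⟨6 * (c * d), by ring⟩]
  rw [mul_left_comm _ (chi12 h : ℂ)]
  congr 1
  rw [show (((12 * d : ℕ) : ℝ) / c) = 12 * d / c by push_cast; rfl, mul_assoc (_ * _) (eFun _)]
  congr 1
  rw [Finset.mul_sum]
  refine Finset.sum_congr rfl fun n _ => ?_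
  rw [← eFun_add]
  congr 1
  push_cast
  field_simp
  ring

lemma Tsum_shift (d m : ℤ) (c : ℕ) (hc : 0 < c) (k : ℤ) :
    Tsum (d + c * m) c k = eFun (-((m : ℝ) / 24)) * Tsum d c k := by
  have hc0 : (c : ℝ) ≠ 0 := by exact_mod_cast hc.ne'
  unfold Tsum
  rw [Finset.mul_sum]
  refine Finset.sum_congr rfl fun j _ => ?_
  rcases chi_cases j with h | ⟨u, hu⟩
  · simp [h]
  · rw [mul_left_comm, ← eFun_add]
    congr 1
    refine eFun_congr (-(m * u)) ?_
    have hu' : (j : ℝ) ^ 2 = 1 + 24 * u := by exact_mod_cast hu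
    rw [hu']
    push_cast
    field_simp
    ring

lemma Tsum_eval (c : ℕ) : 0 < c → ∀ d dbar k : ℤ, Int.gcd d (c : ℤ) = 1 → (c : ℤ) ∣ d * dbar - 1 →
    Tsum d c k = (Real.sqrt (12 * c) : ℂ) * (chi12 k : ℂ) *
      eFun ((dbar * ((k : ℝ) ^ 2 - 1) - d) / (24 * c) + dedekindS d c / 2) := by
  induction c using Nat.strong_induction_on with
  | _ c ih =>
  intro hc d dbar k hg hdv
  rcases Nat.lt_or_ge 1 c with hc1 | hc1
  · -- inductive step
    have hcz : (0 : ℤ) < c := by exact_mod_cast hc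
    obtain ⟨d', hd'⟩ := Int.eq_ofNat_of_zero_le (Int.emod_nonneg d hcz.ne')
    have hlt : d' < c := by
      have := Int.emod_lt_of_pos d hcz
      rw [hd'] at this; exact_mod_cast this
    obtain ⟨m, hm⟩ : ∃ m : ℤ, d = d' + c * m := ⟨d / c, by rw [← hd']; exact (Int.emod_add_mul_ediv d c).symm⟩
    have hcop : Nat.Coprime d' c := by
      rw [hm] at hg
      rw [Int.gcd_add_mul_left_left] at hg
      simpa using hg
    have hpos : 0 < d' := by
      rcases Nat.eq_zero_or_pos d' with h0 | h0
      · subst h0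
        rw [Nat.coprime_zero_left] at hcop
        omega
      · exact h0
    have hc0 : (c : ℝ) ≠ 0 := by exact_mod_cast hc.ne'
    have hd0 : (d' : ℝ) ≠ 0 := by exact_mod_cast hpos.ne'
    have hcd : IsCoprime (-(c : ℤ)) (d' : ℤ) :=
      (Nat.isCoprime_iff_coprime.mpr hcop).symm.neg_left
    obtain ⟨x, y, hxy⟩ := hcd
    have IH := ih d' hlt hpos (-(c : ℤ)) x k
      (by rw [Int.neg_gcd]; exact_mod_cast hcop.symm) ⟨-y, by linear_combination hxy⟩
    have hR := Tsum_recip c d' hc hpos k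
    rw [IH] at hR
    have hS : (Real.sqrt 12 : ℂ) * (Real.sqrt (12 * d') : ℂ) =
        (Real.sqrt (12 * d' / c) : ℂ) * (Real.sqrt (12 * c) : ℂ) := by
      rw [← ofReal_mul, ← ofReal_mul, ← Real.sqrt_mul (by positivity), ← Real.sqrt_mul (by positivity)]
      congr 2; field_simp
    have hSne : (Real.sqrt (12 * d' / c) : ℂ) ≠ 0 := by
      have : (0 : ℝ) < 12 * d' / c := by positivity
      exact_mod_cast (Real.sqrt_pos.mpr this).ne'
    have hT : Tsum d' c k = (Real.sqrt (12 * c) : ℂ) * (chi12 k : ℂ) *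
        (eFun ((x * ((k : ℝ) ^ 2 - 1) - ((-(c : ℤ) : ℤ) : ℝ)) / (24 * d') +
          dedekindS (-(c : ℤ)) d' / 2) * eFun (-(1 / 8)) * eFun ((k : ℝ) ^ 2 / (24 * c * d'))) := by
      have e1 : eFun (1 / 8) * eFun (-(1 / 8)) = 1 := by
        rw [← eFun_add, add_neg_cancel, eFun_zero]
      have e2 : eFun (-((k : ℝ) ^ 2 / (24 * c * d'))) * eFun ((k : ℝ) ^ 2 / (24 * c * d')) = 1 := by
        rw [← eFun_add, neg_add_cancel, eFun_zero]
      generalize eFun (1 / 8) = E1 at *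
      generalize eFun (-(1 / 8)) = E1' at *
      generalize eFun (-((k : ℝ) ^ 2 / (24 * c * d'))) = E2 at *
      generalize eFun ((k : ℝ) ^ 2 / (24 * c * d')) = E2' at *
      generalize eFun ((x * ((k : ℝ) ^ 2 - 1) - ((-(c : ℤ) : ℤ) : ℝ)) / (24 * d') +
          dedekindS (-(c : ℤ)) d' / 2) = E3 at *
      apply mul_left_cancel₀ hSne
      linear_combination (-E1' * E2') * hR + (chi12 k : ℂ) * E3 * E1' * E2' * hS
        - (Real.sqrt (12 * d' / c) : ℂ) * Tsum d' c k * E2 * E2' * e1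
        - (Real.sqrt (12 * d' / c) : ℂ) * Tsum d' c k * e2
    rw [hm, Tsum_shift _ _ _ hc, hT, dedekindS_add_mul _ _ hc]
    rw [mul_left_comm, ← eFun_add, ← eFun_add, ← eFun_add]
    rcases chi_cases k with hk | ⟨u, hu⟩
    · simp [hk]
    · congr 1
      have hrec := dedekind_recip d' c hc hpos hcop
      rw [dedekindS_neg c d' hpos hcop.symm]
      have hs : dedekindS d' c = -1 / 4 + ((d' : ℝ) / c + c / d' + 1 / (c * d')) / 12
          - dedekindS c d' := by linear_combination hrec
      rw [hs]
      have hu' : (k : ℝ) ^ 2 = 1 + 24 * u := by exact_mod_cast hu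
      rw [hu']
      obtain ⟨v, hv⟩ := hdv
      rw [hm] at hv
      obtain ⟨n, hn⟩ : ∃ n : ℤ, y - dbar = c * n :=
        ⟨x * dbar + y * m * dbar - y * v, by linear_combination (-y) * hv + dbar * hxy⟩
      have hn' : (dbar : ℝ) = y - c * n := by
        have : (y : ℝ) - dbar = c * n := by exact_mod_cast hn
        linear_combination -this
      have hx' : (x : ℝ) = (y * d' - 1) / c := by
        have : (x : ℝ) * (-c) + y * d' = 1 := by exact_mod_cast hxy
        field_simp
        linear_combination -this
      refine eFun_congr (u * n) ?_
      rw [hn', hx']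
      push_cast
      field_simp
      ring
  · have hc1' : c = 1 := by omega
    subst hc1'
    have h0 := Tsum_shift 0 d 1 one_pos k
    have hz : Tsum 0 1 k = (Real.sqrt 12 : ℂ) * (chi12 k : ℂ) := by
      rw [Tsum_reindex, ← chi_fourier]
      refine Finset.sum_congr rfl fun h _ => ?_
      simp only [Finset.sum_range_one]
      congr 2
      push_cast; ring
    have hd1 : dedekindS d 1 = 0 := by simp [dedekindS]
    rw [show (0 : ℤ) + ((1 : ℕ) : ℤ) * d = d by simp, hz] at h0
    rw [h0, hd1, mul_comm]
    rcases chi_cases k with hk | ⟨u, hu⟩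
    · simp [hk]
    · have hu' : (k : ℝ) ^ 2 = 1 + 24 * u := by exact_mod_cast hu
      congr 1
      · simp
      · symm
        refine eFun_congr (dbar * u) ?_
        rw [hu']
        push_cast
        ring

end main

/-- Reflection of a sum of a periodic function over a full period. -/
lemma sum_reflect (c : ℕ) (f : ℤ → ℂ) (hf : ∀ x, f (x + c) = f x) :
    ∑ x ∈ range c, f (-(x : ℤ)) = ∑ x ∈ range c, f x := by
  rcases Nat.eq_zero_or_pos c with h0 | h0
  · subst h0; simp
  obtain ⟨n, rfl⟩ : ∃ n, c = n + 1 := ⟨c - 1, by omega⟩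
  rw [Finset.sum_range_succ' , Finset.sum_range_succ', ← Finset.sum_range_reflect]
  congr 1
  refine Finset.sum_congr rfl fun x hx => ?_
  have hx' := Finset.mem_range.mp hx
  rw [← hf]
  congr 1
  push_cast
  omega

theorem statement6 :
    ∀ c : ℕ, 1 ≤ c → ∀ d dbar k : ℤ,
      Int.gcd d (c : ℤ) = 1 → (c : ℤ) ∣ d * dbar - 1 →
      (Real.sqrt (12 * c) : ℂ) * (chi12 k : ℂ) *
          eFun ((dbar : ℝ) * ((k : ℝ) ^ 2 - 1) / (24 * c)) *
          Complex.exp ((Real.pi : ℂ) * Complex.I * (dedekindS d c)) =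
        ∑ h ∈ ({1, 5, 7, 11} : Finset ℤ),
          (chi12 h : ℂ) *
            eFun (-((d : ℝ) * ((h : ℝ) ^ 2 - 1)) / (24 * c) - (h : ℝ) * (k : ℝ) / (12 * c)) *
            quadGaussSum (-6 * d) (d * h + k) c := by
  intro c hc d dbar k hg hdv
  have hc0 : (c : ℝ) ≠ 0 := by exact_mod_cast (show c ≠ 0 by omega)
  have hT := Tsum_eval c hc d dbar k hg hdv
  have hexp : Complex.exp ((Real.pi : ℂ) * Complex.I * (dedekindS d c)) =
      eFun (dedekindS d c / 2) := by
    unfold eFun; congr 1; push_cast; ring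
  have hL : (Real.sqrt (12 * c) : ℂ) * (chi12 k : ℂ) *
          eFun ((dbar : ℝ) * ((k : ℝ) ^ 2 - 1) / (24 * c)) *
          Complex.exp ((Real.pi : ℂ) * Complex.I * (dedekindS d c)) =
      eFun ((d : ℝ) / (24 * c)) * Tsum d c k := by
    rw [hT, hexp, mul_left_comm, ← eFun_add, mul_assoc, ← eFun_add]
    congr 2
    ring
  rw [hL, Tsum_reindex, Finset.mul_sum]
  refine Finset.sum_congr rfl fun h _ => ?_
  rw [mul_left_comm, mul_assoc]
  congr 1
  have hrefl := sum_reflect c (fun x : ℤ =>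
    eFun (-(d * ((h : ℝ) + 12 * x) ^ 2 + 2 * ((h : ℝ) + 12 * x) * k) / (24 * c))) (by
      intro x
      refine eFun_congr (-(d * (h + 12 * x) + 6 * d * c + k)) ?_
      push_cast
      field_simp
      ring)
  simp only [Int.cast_natCast, Int.cast_neg] at hrefl
  rw [← hrefl, quadGaussSum, Finset.mul_sum, Finset.mul_sum]
  refine Finset.sum_congr rfl fun x _ => ?_
  rw [← eFun_add, ← eFun_add]
  congr 1
  push_cast
  field_simp
  ring
end
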